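/- Let X = {(R₋,S₋,R₊,S₊) ∈ SU(2)⁴ : R₋S₋R₋⁻¹S₋⁻¹R₊S₊R₊⁻¹S₊⁻¹ = 1}, topologized as a subspace of ℍ⁴, and let χ(F₂) be the quotient of X, with the quotient topology, by the action of SU(2) by simultaneous conjugation. Then χ(F₂) is homeomorphic to the complex projective space ℂP³, the projectivization of the complex vector space ℂ⁴. -/

import Mathlib

noncomputable section

/-- The condition defining the representation space of the genus two surface group:
quadruples `(R₋, S₋, R₊, S₊)` of unit quaternions (elements of `SU(2)`) satisfying the
genus two surface relation `[R₋,S₋][R₊,S₊] = 1`. -/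
def memX (t : Quaternion ℝ × Quaternion ℝ × Quaternion ℝ × Quaternion ℝ) : Prop :=
  ‖t.1‖ = 1 ∧ ‖t.2.1‖ = 1 ∧ ‖t.2.2.1‖ = 1 ∧ ‖t.2.2.2‖ = 1 ∧
    t.1 * t.2.1 * t.1⁻¹ * t.2.1⁻¹ * (t.2.2.1 * t.2.2.2 * t.2.2.1⁻¹ * t.2.2.2⁻¹) = 1

/-- The representation space `X ⊂ ℍ⁴`, with the subspace topology. -/
abbrev GenusTwoRepSpace : Type := {t // memX t}

/-- Two points of `X` are related iff they are simultaneously conjugate by a unit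
quaternion `u ∈ SU(2)`. -/
def conjRel (s t : GenusTwoRepSpace) : Prop :=
  ∃ u : Quaternion ℝ, ‖u‖ = 1 ∧
    t.1.1 = u * s.1.1 * u⁻¹ ∧ t.1.2.1 = u * s.1.2.1 * u⁻¹ ∧
    t.1.2.2.1 = u * s.1.2.2.1 * u⁻¹ ∧ t.1.2.2.2 = u * s.1.2.2.2 * u⁻¹

/-- The `SU(2)` character variety `χ(F₂)` of the genus two surface: the quotient of `X`
by simultaneous conjugation, with the quotient topology. -/
abbrev ChiF2 : Type := Quot conjRel

/-- Nonzero vectors of `ℂ⁴`. -/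
def projRel (v w : {v : Fin 4 → ℂ // v ≠ 0}) : Prop := ∃ c : ℂ, c ≠ 0 ∧ w.1 = c • v.1

/-- `ℂP³`: the projectivization of `ℂ⁴`, i.e. nonzero vectors of `ℂ⁴` modulo nonzero
complex scalars, with the quotient topology. -/
abbrev CP3 : Type := Quot projRel

open ComplexConjugate
local notation "HH" => Quaternion ℝ

section PA

theorem nsq_iff (q : HH) : ‖q‖ = 1 ↔ Quaternion.normSq q = 1 := by
  rw [Quaternion.normSq_eq_norm_mul_self]
  constructor
  · intro h; rw [h]; norm_num
  · intro h; nlinarith [norm_nonneg q]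

theorem inv_unit {q : HH} (h : Quaternion.normSq q = 1) : q⁻¹ = star q := by
  rw [Quaternion.inv_def, h]; simp

theorem mul_star_unit {q : HH} (h : Quaternion.normSq q = 1) : q * star q = 1 := by
  rw [Quaternion.self_mul_star, h]; simp

theorem star_mul_unit {q : HH} (h : Quaternion.normSq q = 1) : star q * q = 1 := by
  rw [Quaternion.star_mul_self, h]; simp

theorem nsq_expand {q : HH} (h : Quaternion.normSq q = 1) :
    q.re ^ 2 + q.imI ^ 2 + q.imJ ^ 2 + q.imK ^ 2 = 1 := by
  have := Quaternion.normSq_def' q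
  linarith

theorem nsq_star {q : HH} (h : Quaternion.normSq q = 1) : Quaternion.normSq (star q) = 1 := by
  rw [Quaternion.normSq_star, h]

theorem nsq_mul {q r : HH} (h : Quaternion.normSq q = 1) (h' : Quaternion.normSq r = 1) :
    Quaternion.normSq (q * r) = 1 := by
  rw [map_mul, h, h', one_mul]

def mkq (a b c d : ℝ) : HH := ⟨a, b, c, d⟩
@[simp] theorem mkq_re (a b c d : ℝ) : (mkq a b c d).re = a := rfl
@[simp] theorem mkq_imI (a b c d : ℝ) : (mkq a b c d).imI = b := rfl
@[simp] theorem mkq_imJ (a b c d : ℝ) : (mkq a b c d).imJ = c := rfl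
@[simp] theorem mkq_imK (a b c d : ℝ) : (mkq a b c d).imK = d := rfl

def qi : HH := mkq 0 1 0 0
def qj : HH := mkq 0 0 1 0
def qk : HH := mkq 0 0 0 1

def rr1 (y : HH) : HH := star y * qi * y
def rr2 (y : HH) : HH := star y * qj * y
def nx (y : HH) : ℝ := 2 * (y.re * y.imJ + y.imK * y.imI)
def ny (y : HH) : ℝ := 2 * (y.imK * y.imJ - y.re * y.imI)
def nz (y : HH) : ℝ := y.re ^ 2 + y.imK ^ 2 - y.imI ^ 2 - y.imJ ^ 2

theorem rr1_k (y : HH) : (rr1 y).imK = nx y := by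
  simp [rr1, qi, nx]; ring
theorem rr2_k (y : HH) : (rr2 y).imK = ny y := by
  simp [rr2, qj, ny]; ring
theorem rr1_re (y : HH) : (rr1 y).re = 0 := by
  simp [rr1, qi]; ring
theorem rr2_re (y : HH) : (rr2 y).re = 0 := by
  simp [rr2, qj]; ring

theorem nxyz {y : HH} (h : Quaternion.normSq y = 1) : nx y ^ 2 + ny y ^ 2 + nz y ^ 2 = 1 := by
  have := nsq_expand h
  have h2 : nx y ^ 2 + ny y ^ 2 + nz y ^ 2 =
    (y.re ^ 2 + y.imI ^ 2 + y.imJ ^ 2 + y.imK ^ 2) ^ 2 := by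
    simp only [nx, ny, nz]; ring
  rw [h2, this]; norm_num

def cc (D : ℝ) : ℝ := √((1 + D) / 2)
def ss (D : ℝ) : ℝ := √((1 - D) / 2)
def AA (D x y : ℝ) : ℝ := √((1 - (1 - D) * y ^ 2) / (2 - (1 - D) * (x ^ 2 + y ^ 2)))

def rotp (c s : ℝ) (U : HH) : HH := mkq 0 (c * U.imI - s * U.imJ) (c * U.imJ + s * U.imI) U.imK

def Pof (D : ℝ) (U V : HH) : HH := rotp (cc D) (ss D) (U + V)
def Qof (D : ℝ) (U V : HH) : HH := rotp (cc D) (-ss D) (U - V)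

def UU (y : HH) (D : ℝ) : HH := AA D (nx y) (ny y) • rr1 y
def VV (y : HH) (D : ℝ) : HH := AA D (ny y) (nx y) • rr2 y
def PP (y : HH) (D : ℝ) : HH := Pof D (UU y D) (VV y D)
def QQ (y : HH) (D : ℝ) : HH := Qof D (UU y D) (VV y D)
def g0 (D : ℝ) : HH := mkq D 0 0 (2 * cc D * ss D)
def hR (y : HH) (D : ℝ) : HH := PP y D * QQ y D
def hS (y : HH) (D : ℝ) : HH := star (hR y D) * g0 D * QQ y D

theorem cc_sq {D : ℝ} (h0 : 0 ≤ D) : cc D ^ 2 = (1 + D) / 2 := by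
  rw [cc, Real.sq_sqrt]; linarith
theorem ss_sq {D : ℝ} (h1 : D ≤ 1) : ss D ^ 2 = (1 - D) / 2 := by
  rw [ss, Real.sq_sqrt]; linarith

theorem g0_unit {D : ℝ} (h0 : 0 ≤ D) (h1 : D ≤ 1) : Quaternion.normSq (g0 D) = 1 := by
  rw [Quaternion.normSq_def']; simp only [g0, mkq_re, mkq_imI, mkq_imJ, mkq_imK]
  have := cc_sq h0; have := ss_sq h1
  have h : (2 * cc D * ss D) ^ 2 = 4 * (cc D ^ 2) * (ss D ^ 2) := by ring
  rw [h, cc_sq h0, ss_sq h1]; ring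

theorem den_pos {D x y : ℝ} (h0 : 0 ≤ D) (h1 : D ≤ 1) (h : x ^ 2 + y ^ 2 ≤ 1) :
    0 < 2 - (1 - D) * (x ^ 2 + y ^ 2) := by nlinarith [sq_nonneg x, sq_nonneg y]

theorem AA_sq {D x y : ℝ} (h0 : 0 ≤ D) (h1 : D ≤ 1) (h : x ^ 2 + y ^ 2 ≤ 1) :
    AA D x y ^ 2 * (2 - (1 - D) * (x ^ 2 + y ^ 2)) = 1 - (1 - D) * y ^ 2 := by
  have hd := den_pos h0 h1 h
  rw [AA, Real.sq_sqrt, div_mul_cancel₀ _ hd.ne']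
  apply div_nonneg _ hd.le
  nlinarith [sq_nonneg x, sq_nonneg y]

theorem AA_nonneg (D x y : ℝ) : 0 ≤ AA D x y := Real.sqrt_nonneg _

theorem AB_one {D x y : ℝ} (h0 : 0 ≤ D) (h1 : D ≤ 1) (h : x ^ 2 + y ^ 2 ≤ 1) :
    AA D x y ^ 2 + AA D y x ^ 2 = 1 := by
  have e1 := AA_sq h0 h1 h
  have e2 := AA_sq h0 h1 (x := y) (y := x) (by linarith)
  have hd := den_pos h0 h1 h
  have : (AA D x y ^ 2 + AA D y x ^ 2) * (2 - (1 - D) * (x ^ 2 + y ^ 2))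
    = 1 * (2 - (1 - D) * (x ^ 2 + y ^ 2)) := by linarith
  exact mul_right_cancel₀ hd.ne' this

theorem AB_eq {D x y : ℝ} (h0 : 0 ≤ D) (h1 : D ≤ 1) (h : x ^ 2 + y ^ 2 ≤ 1) :
    2 * AA D x y ^ 2 = 1 + (1 - D) * (AA D x y ^ 2 * x ^ 2 - AA D y x ^ 2 * y ^ 2) := by
  have e1 := AA_sq h0 h1 h
  have e2 := AB_one h0 h1 h
  linear_combination e1 + (1 - D) * y ^ 2 * e2

theorem nsq_rr1 {y : HH} (h : Quaternion.normSq y = 1) : Quaternion.normSq (rr1 y) = 1 := by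
  simp only [rr1, map_mul, Quaternion.normSq_star, h]
  rw [Quaternion.normSq_def']; simp [qi]
theorem nsq_rr2 {y : HH} (h : Quaternion.normSq y = 1) : Quaternion.normSq (rr2 y) = 1 := by
  simp only [rr2, map_mul, Quaternion.normSq_star, h]
  rw [Quaternion.normSq_def']; simp [qj]
theorem rr_orth (y : HH) :
    (rr1 y).imI * (rr2 y).imI + (rr1 y).imJ * (rr2 y).imJ + (rr1 y).imK * (rr2 y).imK = 0 := by
  simp [rr1, rr2, qi, qj]; ring
theorem rr_cross {y : HH} (h : Quaternion.normSq y = 1) :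
    (rr1 y).imI * (rr2 y).imJ - (rr1 y).imJ * (rr2 y).imI = nz y := by
  have e := nsq_expand h
  have : (rr1 y).imI * (rr2 y).imJ - (rr1 y).imJ * (rr2 y).imI =
    nz y * (y.re ^ 2 + y.imI ^ 2 + y.imJ ^ 2 + y.imK ^ 2) := by
    simp [rr1, rr2, qi, qj, nz]; ring
  rw [this, e, mul_one]

/-- abstract data -/
structure UVData (D : ℝ) (U V : HH) : Prop where
  ure : U.re = 0
  vre : V.re = 0
  orth : U.imI * V.imI + U.imJ * V.imJ + U.imK * V.imK = 0
  sum : (U.imI ^ 2 + U.imJ ^ 2 + U.imK ^ 2) + (V.imI ^ 2 + V.imJ ^ 2 + V.imK ^ 2) = 1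
  bal : 2 * (U.imI ^ 2 + U.imJ ^ 2 + U.imK ^ 2) = 1 + (1 - D) * (U.imK ^ 2 - V.imK ^ 2)

theorem uvdata {y : HH} {D : ℝ} (h : Quaternion.normSq y = 1) (h0 : 0 ≤ D) (h1 : D ≤ 1) :
    UVData D (UU y D) (VV y D) := by
  have hn : nx y ^ 2 + ny y ^ 2 ≤ 1 := by nlinarith [nxyz h, sq_nonneg (nz y)]
  have a1 := nsq_expand (nsq_rr1 h)
  have a2 := nsq_expand (nsq_rr2 h)
  have a3 := rr_orth y
  have a4 := AB_one h0 h1 hn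
  have a5 := AB_eq h0 h1 hn
  rw [rr1_re] at a1
  rw [rr2_re] at a2
  constructor
  · simp [UU, rr1_re]
  · simp [VV, rr2_re]
  · simp [UU, VV]; linear_combination AA D (nx y) (ny y) * AA D (ny y) (nx y) * a3
  · simp [UU, VV]
    linear_combination AA D (nx y) (ny y) ^ 2 * a1 + AA D (ny y) (nx y) ^ 2 * a2 + a4
  · simp [UU, VV]
    rw [rr1_k] at *; rw [rr2_k] at *
    linear_combination 2 * AA D (nx y) (ny y) ^ 2 * a1 + a5

theorem PQ_facts {D : ℝ} {U V : HH} (h0 : 0 ≤ D) (h1 : D ≤ 1) (h : UVData D U V) :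
    Quaternion.normSq (Pof D U V) = 1 ∧ Quaternion.normSq (Qof D U V) = 1 ∧
    (Pof D U V).re = 0 ∧ (Qof D U V).re = 0 ∧ (star (g0 D) * (Pof D U V * Qof D U V)).re = 0 := by
  obtain ⟨u, v, o, s, b⟩ := h
  have ec := cc_sq h0
  have es := ss_sq h1
  refine ⟨?_, ?_, rfl, rfl, ?_⟩
  · rw [Quaternion.normSq_def']; simp [Pof, rotp]
    linear_combination s + 2 * o + ((U.imI + V.imI) ^ 2 + (U.imJ + V.imJ) ^ 2) * (ec + es)
  · rw [Quaternion.normSq_def']; simp [Qof, rotp]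
    linear_combination s - 2 * o + ((U.imI - V.imI) ^ 2 + (U.imJ - V.imJ) ^ 2) * (ec + es)
  · simp [Pof, Qof, rotp, g0]
    set c := cc D
    set t := ss D
    have hD : D = c ^ 2 - t ^ 2 := by linarith
    have h1 : c ^ 2 + t ^ 2 = 1 := by linarith
    rw [hD] at b ⊢
    linear_combination -(b - s) - ((U.imI ^ 2 + U.imJ ^ 2) - (V.imI ^ 2 + V.imJ ^ 2)) *
      (c ^ 2 + t ^ 2 + 1) * h1

end PA

section PB

theorem re_comm (a b : HH) : (a * b).re = (b * a).re := by
  simp; ring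

theorem imag_star {q : HH} (h : q.re = 0) : star q = -q := by
  ext <;> simp [h]

theorem imag_sq {q : HH} (h : q.re = 0) (hn : Quaternion.normSq q = 1) : q * q = -1 := by
  have := star_mul_unit hn
  rw [imag_star h] at this
  rw [← this]; simp

theorem comm_formula {P Q g : HH} (hP : P.re = 0) (hQ : Q.re = 0) (nP : Quaternion.normSq P = 1)
    (nQ : Quaternion.normSq Q = 1) (ng : Quaternion.normSq g = 1)
    (h : (star g * (P * Q)).re = 0) :
    (P * Q) * (star (P * Q) * g * Q) * star (P * Q) * star (star (P * Q) * g * Q) = -(g * g) := by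
  have nR := nsq_mul nP nQ
  have e1 := imag_sq hQ nQ
  have e2 := imag_sq h (nsq_mul (nsq_star ng) nR)
  have e3 := mul_star_unit nR
  have sP := imag_star hP
  have sQ := imag_star hQ
  have eg := mul_star_unit ng
  have e4 : star (P * Q) = Q * P := by rw [star_mul, sP, sQ]; simp
  have s1 : star (star (P * Q) * g * Q) = -(Q * (star g * (P * Q))) := by
    rw [star_mul, star_mul, star_star, sQ]; simp
  have s2 : (P * Q) * (star (P * Q) * g * Q) = g * Q := by
    rw [← mul_assoc, ← mul_assoc, e3, one_mul]
  rw [s1, s2, e4]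
  have e5 : g * Q * (Q * P) * -(Q * (star g * (P * Q))) =
    - (g * (Q * Q) * (P * Q) * (star g * (P * Q))) := by noncomm_ring
  rw [e5, e1]
  have e6 : (P * Q) * (star g * (P * Q)) = -g := by
    have : g * ((star g * (P * Q)) * (star g * (P * Q))) = g * -1 := by rw [e2]
    have h9 : g * ((star g * (P * Q)) * (star g * (P * Q))) =
      (g * star g) * ((P * Q) * (star g * (P * Q))) := by noncomm_ring
    rw [h9, eg, one_mul] at this
    rw [this]; simp
  have e7 : -(g * -1 * (P * Q) * (star g * (P * Q))) = g * ((P * Q) * (star g * (P * Q))) := by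
    noncomm_ring
  rw [e7, e6]; simp

variable {y : HH} {D : ℝ}

theorem PP_facts (h : Quaternion.normSq y = 1) (h0 : 0 ≤ D) (h1 : D ≤ 1) :
    Quaternion.normSq (PP y D) = 1 ∧ Quaternion.normSq (QQ y D) = 1 ∧
    (PP y D).re = 0 ∧ (QQ y D).re = 0 ∧ (star (g0 D) * (PP y D * QQ y D)).re = 0 :=
  PQ_facts h0 h1 (uvdata h h0 h1)

theorem hR_unit (h : Quaternion.normSq y = 1) (h0 : 0 ≤ D) (h1 : D ≤ 1) :
    Quaternion.normSq (hR y D) = 1 := by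
  obtain ⟨a, b, _⟩ := PP_facts h h0 h1
  exact nsq_mul a b
theorem hS_unit (h : Quaternion.normSq y = 1) (h0 : 0 ≤ D) (h1 : D ≤ 1) :
    Quaternion.normSq (hS y D) = 1 := by
  obtain ⟨a, b, _⟩ := PP_facts h h0 h1
  exact nsq_mul (nsq_mul (nsq_star (nsq_mul a b)) (g0_unit h0 h1)) b

theorem h_comm (h : Quaternion.normSq y = 1) (h0 : 0 ≤ D) (h1 : D ≤ 1) :
    hR y D * hS y D * star (hR y D) * star (hS y D) = -(g0 D * g0 D) := by
  obtain ⟨a, b, c, d, e⟩ := PP_facts h h0 h1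
  exact comm_formula c d a b (g0_unit h0 h1) e

theorem hRS (h : Quaternion.normSq y = 1) (h0 : 0 ≤ D) (h1 : D ≤ 1) :
    hR y D * hS y D = g0 D * QQ y D := by
  rw [hS, ← mul_assoc, ← mul_assoc, mul_star_unit (hR_unit h h0 h1), one_mul]

theorem re_hRS (h : Quaternion.normSq y = 1) (h0 : 0 ≤ D) (h1 : D ≤ 1) :
    (hR y D * hS y D).re = -(2 * cc D * ss D) * (QQ y D).imK := by
  obtain ⟨a, b, c, d, e⟩ := PP_facts h h0 h1
  rw [hRS h h0 h1]; simp [g0, d]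

theorem re_hS (h : Quaternion.normSq y = 1) (h0 : 0 ≤ D) (h1 : D ≤ 1) :
    (hS y D).re = (2 * cc D * ss D) * (PP y D).imK := by
  obtain ⟨a, b, c, d, e⟩ := PP_facts h h0 h1
  have : (hS y D).re = (-(PP y D * g0 D)).re := by
    rw [hS, re_comm, hR, star_mul, imag_star c, imag_star d]
    have e1 := imag_sq d b
    have : QQ y D * (-QQ y D * -PP y D * g0 D) = (QQ y D * QQ y D) * PP y D * g0 D := by
      noncomm_ring
    rw [this, e1]; simp only [neg_mul, one_mul]
  rw [this]; simp [g0, c]; ring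

theorem re_hR (h : Quaternion.normSq y = 1) (h0 : 0 ≤ D) (h1 : D ≤ 1) :
    (hR y D).re = -((UU y D).imK ^ 2 - (VV y D).imK ^ 2
      - D * D * ((UU y D).imK ^ 2 - (VV y D).imK ^ 2)
      - 2 * (2 * cc D * ss D) * ((AA D (nx y) (ny y)) * AA D (ny y) (nx y) * nz y)) := by
  obtain ⟨u, v, o, s, b⟩ := uvdata h h0 h1
  have ec := cc_sq h0
  have es := ss_sq h1
  have cr := rr_cross h
  have cr' : (UU y D).imI * (VV y D).imJ - (UU y D).imJ * (VV y D).imI =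
    (AA D (nx y) (ny y)) * AA D (ny y) (nx y) * nz y := by
    simp [UU, VV]; linear_combination (AA D (nx y) (ny y)) * AA D (ny y) (nx y) * cr
  rw [← cr']
  simp [hR, PP, QQ, Pof, Qof, rotp]
  generalize UU y D = U at *
  generalize VV y D = V at *
  set c := cc D
  set t := ss D
  have hX : (U.imI ^ 2 + U.imJ ^ 2) - (V.imI ^ 2 + V.imJ ^ 2) = - D * (U.imK ^ 2 - V.imK ^ 2) := by
    linarith
  have hD : c ^ 2 - t ^ 2 = D := by linarith
  linear_combination (-D) * hX - ((U.imI ^ 2 + U.imJ ^ 2) - (V.imI ^ 2 + V.imJ ^ 2)) * hD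

/-- gauge -/
def IsG (u : HH) : Prop := u.imI = 0 ∧ u.imJ = 0 ∧ Quaternion.normSq u = 1

theorem IsG.sq {u : HH} (h : IsG u) : u.re ^ 2 + u.imK ^ 2 = 1 := by
  have := nsq_expand h.2.2
  rw [h.1, h.2.1] at this; linarith

theorem rr1_g (y u : HH) : rr1 (y * u) = star u * rr1 y * u := by
  simp only [rr1, star_mul, mul_assoc]
theorem rr2_g (y u : HH) : rr2 (y * u) = star u * rr2 y * u := by
  simp only [rr2, star_mul, mul_assoc]
theorem nx_g (y : HH) {u : HH} (h : IsG u) : nx (y * u) = nx y := by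
  have := h.sq
  simp [nx, h.1, h.2.1]
  linear_combination ((y.re * y.imJ + y.imK * y.imI)) * this
theorem ny_g (y : HH) {u : HH} (h : IsG u) : ny (y * u) = ny y := by
  have := h.sq
  simp [ny, h.1, h.2.1]
  linear_combination ((y.imK * y.imJ - y.re * y.imI)) * this

theorem rotp_g (c s : ℝ) (U : HH) {u : HH} (h : IsG u) :
    rotp c s (star u * U * u) = star u * rotp c s U * u := by
  ext <;> simp [rotp, h.1, h.2.1] <;> ring

theorem g0_g (D : ℝ) {u : HH} (h : IsG u) : g0 D * u = u * g0 D := by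
  ext <;> simp [g0, h.1, h.2.1] <;> ring

theorem UU_g (y : HH) (D : ℝ) {u : HH} (h : IsG u) : UU (y * u) D = star u * UU y D * u := by
  simp only [UU, nx_g y h, ny_g y h, rr1_g]; simp
theorem VV_g (y : HH) (D : ℝ) {u : HH} (h : IsG u) : VV (y * u) D = star u * VV y D * u := by
  simp only [VV, nx_g y h, ny_g y h, rr2_g]; simp
theorem PP_g (y : HH) (D : ℝ) {u : HH} (h : IsG u) : PP (y * u) D = star u * PP y D * u := by
  rw [PP, UU_g y D h, VV_g y D h, Pof, ← add_mul, ← mul_add, rotp_g _ _ _ h]; rfl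
theorem QQ_g (y : HH) (D : ℝ) {u : HH} (h : IsG u) : QQ (y * u) D = star u * QQ y D * u := by
  rw [QQ, UU_g y D h, VV_g y D h, Qof, ← sub_mul, ← mul_sub, rotp_g _ _ _ h]; rfl

theorem cnj_mul {u : HH} (h : Quaternion.normSq u = 1) (a b : HH) :
    star u * a * u * (star u * b * u) = star u * (a * b) * u := by
  have : star u * a * u * (star u * b * u) = star u * a * (u * star u) * b * u := by noncomm_ring
  rw [this, mul_star_unit h]; noncomm_ring

theorem hR_g (y : HH) (D : ℝ) {u : HH} (h : IsG u) : hR (y * u) D = star u * hR y D * u := by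
  rw [hR, PP_g y D h, QQ_g y D h, cnj_mul h.2.2]; rfl
theorem hS_g (y : HH) (D : ℝ) {u : HH} (h : IsG u) : hS (y * u) D = star u * hS y D * u := by
  have e : g0 D = star u * g0 D * u := by
    rw [mul_assoc, g0_g D h, ← mul_assoc, star_mul_unit h.2.2, one_mul]
  rw [hS, hR_g y D h, QQ_g y D h, star_mul, star_mul, star_star]
  nth_rewrite 1 [e]
  rw [← mul_assoc (star u), cnj_mul h.2.2, cnj_mul h.2.2]; rfl

theorem PP_one (y : HH) : PP y 1 = √(1/2) • (star y * (qi + qj) * y) := by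
  have a : rr1 y + rr2 y = star y * (qi + qj) * y := by simp only [rr1, rr2]; noncomm_ring
  have b : AA 1 (nx y) (ny y) = √(1/2) := by simp [AA]
  have c : AA 1 (ny y) (nx y) = √(1/2) := by simp [AA]
  have d : cc 1 = 1 := by simp [cc]
  have e : ss 1 = 0 := by simp [ss]
  rw [PP, Pof, UU, VV, b, c, ← smul_add, a, d, e]
  ext <;> simp [rotp, qi, qj]
  ring
theorem QQ_one (y : HH) : QQ y 1 = √(1/2) • (star y * (qi - qj) * y) := by
  have a : rr1 y - rr2 y = star y * (qi - qj) * y := by simp only [rr1, rr2]; noncomm_ring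
  have b : AA 1 (nx y) (ny y) = √(1/2) := by simp [AA]
  have c : AA 1 (ny y) (nx y) = √(1/2) := by simp [AA]
  have d : cc 1 = 1 := by simp [cc]
  have e : ss 1 = 0 := by simp [ss]
  rw [QQ, Qof, UU, VV, b, c, ← smul_sub, a, d, e]
  ext <;> simp [rotp, qi, qj]
  ring

theorem PP_one' (y : HH) : PP y 1 = star y * PP 1 1 * y := by
  rw [PP_one y, PP_one 1]; simp only [star_one, one_mul, mul_one, mul_smul_comm, smul_mul_assoc]
theorem QQ_one' (y : HH) : QQ y 1 = star y * QQ 1 1 * y := by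
  rw [QQ_one y, QQ_one 1]; simp only [star_one, one_mul, mul_one, mul_smul_comm, smul_mul_assoc]
theorem hR_one {y : HH} (h : Quaternion.normSq y = 1) : hR y 1 = star y * hR 1 1 * y := by
  rw [hR, PP_one' y, QQ_one' y, cnj_mul h]; rfl
theorem hS_one {y : HH} (h : Quaternion.normSq y = 1) : hS y 1 = star y * hS 1 1 * y := by
  have e0 : g0 1 = 1 := by
    have : ss 1 = 0 := by simp [ss]
    rw [g0, this, mul_zero]; rfl
  rw [hS, hR_one h, QQ_one' y, star_mul, star_mul, star_star, e0, mul_one,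
    ← mul_assoc (star y), cnj_mul h, hS, e0, mul_one]

end PB

section PC

theorem gauge_of_n {y y' : HH} (h : Quaternion.normSq y = 1) (h' : Quaternion.normSq y' = 1)
    (e1 : nx y = nx y') (e2 : ny y = ny y') (e3 : nz y = nz y') :
    ∃ u, IsG u ∧ y = y' * u := by
  refine ⟨star y' * y, ?_, ?_⟩
  · have n := nxyz h
    have a := nsq_expand h
    have a' := nsq_expand h'
    have key : 2 * ((star y' * y).imI ^ 2 + (star y' * y).imJ ^ 2) =
      (y.re ^ 2 + y.imI ^ 2 + y.imJ ^ 2 + y.imK ^ 2) *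
      (y'.re ^ 2 + y'.imI ^ 2 + y'.imJ ^ 2 + y'.imK ^ 2)
      - (nx y * nx y' + ny y * ny y' + nz y * nz y') := by
      simp [nx, ny, nz]; ring
    rw [← e1, ← e2, ← e3, a, a'] at key
    have key2 : (star y' * y).imI ^ 2 + (star y' * y).imJ ^ 2 = 0 := by nlinarith
    refine ⟨?_, ?_, nsq_mul (nsq_star h') h⟩
    · have : (star y' * y).imI ^ 2 = 0 := by
        nlinarith [sq_nonneg (star y' * y).imI, sq_nonneg (star y' * y).imJ]
      exact pow_eq_zero_iff two_ne_zero |>.1 this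
    · have : (star y' * y).imJ ^ 2 = 0 := by
        nlinarith [sq_nonneg (star y' * y).imI, sq_nonneg (star y' * y).imJ]
      exact pow_eq_zero_iff two_ne_zero |>.1 this
  · rw [← mul_assoc, mul_star_unit h', one_mul]

theorem n_of_A0 {D x y z : ℝ} (h0 : 0 ≤ D) (h1 : D ≤ 1) (h : x ^ 2 + y ^ 2 + z ^ 2 = 1)
    (hA : AA D x y = 0) : x = 0 ∧ y ^ 2 = 1 ∧ z = 0 := by
  have e := AA_sq h0 h1 (x := x) (y := y) (by nlinarith [sq_nonneg z])
  rw [hA] at e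
  have hy : y ^ 2 = 1 := by nlinarith [sq_nonneg x, sq_nonneg z, sq_nonneg y]
  refine ⟨?_, hy, ?_⟩
  · have : x ^ 2 = 0 := by nlinarith [sq_nonneg x, sq_nonneg z]
    exact pow_eq_zero_iff two_ne_zero |>.1 this
  · have : z ^ 2 = 0 := by nlinarith [sq_nonneg x, sq_nonneg z]
    exact pow_eq_zero_iff two_ne_zero |>.1 this

theorem q_pos {D : ℝ} (h0 : 0 ≤ D) (h1 : D < 1) : 0 < 2 * cc D * ss D := by
  have : 0 < cc D := Real.sqrt_pos.2 (by linarith)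
  have : 0 < ss D := Real.sqrt_pos.2 (by linarith)
  positivity

theorem lemT_real {D x y z x' y' z' : ℝ} (h0 : 0 ≤ D) (h1 : D ≤ 1)
    (h : x ^ 2 + y ^ 2 + z ^ 2 = 1) (h' : x' ^ 2 + y' ^ 2 + z' ^ 2 = 1)
    (ea : AA D x y * x = AA D x' y' * x') (eb : AA D y x * y = AA D y' x' * y')
    (ec : AA D x y * AA D y x * z = AA D x' y' * AA D y' x' * z') :
    x = x' ∧ y = y' ∧ z = z' := by
  have hA : AA D x y = AA D x' y' := by
    have e := AB_eq h0 h1 (x := x) (y := y) (by nlinarith [sq_nonneg z])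
    have e' := AB_eq h0 h1 (x := x') (y := y') (by nlinarith [sq_nonneg z'])
    have : AA D x y ^ 2 = AA D x' y' ^ 2 := by
      rw [← mul_pow, ← mul_pow] at e e'
      rw [ea, eb] at e; linarith
    exact (sq_eq_sq₀ (AA_nonneg _ _ _) (AA_nonneg _ _ _)).1 this
  have hB : AA D y x = AA D y' x' := by
    have e := AB_one h0 h1 (x := x) (y := y) (by nlinarith [sq_nonneg z])
    have e' := AB_one h0 h1 (x := x') (y := y') (by nlinarith [sq_nonneg z'])
    rw [hA] at e
    exact (sq_eq_sq₀ (AA_nonneg _ _ _) (AA_nonneg _ _ _)).1 (by linarith)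
  have e := AB_one h0 h1 (x := x) (y := y) (by nlinarith [sq_nonneg z])
  rw [← hA] at ea ec
  rw [← hB] at eb ec
  by_cases hA0 : AA D x y = 0
  · obtain ⟨a, b, c⟩ := n_of_A0 h0 h1 h hA0
    obtain ⟨a', b', c'⟩ := n_of_A0 h0 h1 h' (hA ▸ hA0)
    have hB0 : AA D y x ≠ 0 := by intro hh; rw [hh, hA0] at e; norm_num at e
    exact ⟨a.trans a'.symm, mul_left_cancel₀ hB0 eb, c.trans c'.symm⟩
  · by_cases hB0 : AA D y x = 0
    · obtain ⟨a, b, c⟩ := n_of_A0 h0 h1 (x := y) (y := x) (z := z) (by linarith) hB0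
      obtain ⟨a', b', c'⟩ := n_of_A0 h0 h1 (x := y') (y := x') (z := z') (by linarith) (hB ▸ hB0)
      exact ⟨mul_left_cancel₀ hA0 ea, a.trans a'.symm, c.trans c'.symm⟩
    · exact ⟨mul_left_cancel₀ hA0 ea, mul_left_cancel₀ hB0 eb,
        mul_left_cancel₀ (mul_ne_zero hA0 hB0) ec⟩

theorem lemT {y y' : HH} {D : ℝ} (h : Quaternion.normSq y = 1) (h' : Quaternion.normSq y' = 1)
    (h0 : 0 ≤ D) (h1 : D < 1) (t1 : (hR y D).re = (hR y' D).re) (t2 : (hS y D).re = (hS y' D).re)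
    (t3 : (hR y D * hS y D).re = (hR y' D * hS y' D).re) :
    ∃ u, IsG u ∧ y = y' * u := by
  have q := q_pos h0 h1
  rw [re_hS h h0 h1.le, re_hS h' h0 h1.le] at t2
  rw [re_hRS h h0 h1.le, re_hRS h' h0 h1.le] at t3
  rw [re_hR h h0 h1.le, re_hR h' h0 h1.le] at t1
  have p1 := mul_left_cancel₀ q.ne' t2
  have p2 := mul_left_cancel₀ (neg_ne_zero.2 q.ne') t3
  simp only [PP, QQ, Pof, Qof, rotp, mkq_imK, Quaternion.imK_add, Quaternion.imK_sub] at p1 p2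
  have a1 : (UU y D).imK = (UU y' D).imK := by linarith
  have a2 : (VV y D).imK = (VV y' D).imK := by linarith
  rw [a1, a2] at t1
  have a3 : AA D (nx y) (ny y) * AA D (ny y) (nx y) * nz y =
    AA D (nx y') (ny y') * AA D (ny y') (nx y') * nz y' := by
    apply mul_left_cancel₀ q.ne'
    linarith
  simp only [UU, VV, Quaternion.imK_smul, smul_eq_mul, rr1_k, rr2_k] at a1 a2
  obtain ⟨b1, b2, b3⟩ := lemT_real h0 h1.le (nxyz h) (nxyz h') a1 a2 a3
  exact gauge_of_n h h' b1 b2 b3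

theorem par3 {a b c x y z x' y' z' : ℝ} (h : c ≠ 0) (c1 : b * z = c * y) (c2 : c * x = a * z)
    (c3 : a * y = b * x) (d1 : b * z' = c * y') (d2 : c * x' = a * z') (d3 : a * y' = b * x') :
    y * z' = z * y' ∧ z * x' = x * z' ∧ x * y' = y * x' := by
  refine ⟨?_, ?_, ?_⟩ <;> apply mul_left_cancel₀ h
  · linear_combination z * d1 - z' * c1
  · linear_combination z * d2 - z' * c2
  · linear_combination y' * c2 + z * d3 + x' * c1

theorem one_mkq : (1 : HH) = mkq 1 0 0 0 := rfl

theorem central {t R S : HH} (ht : Quaternion.normSq t = 1) (h1 : t * R = R * t)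
    (h2 : t * S = S * t) (h : R * S ≠ S * R) : t = 1 ∨ t = -1 := by
  have key : t.imI = 0 ∧ t.imJ = 0 ∧ t.imK = 0 := by
    have a1 := congrArg (fun q : HH => q.imI) h1
    have a2 := congrArg (fun q : HH => q.imJ) h1
    have a3 := congrArg (fun q : HH => q.imK) h1
    have b1 := congrArg (fun q : HH => q.imI) h2
    have b2 := congrArg (fun q : HH => q.imJ) h2
    have b3 := congrArg (fun q : HH => q.imK) h2
    simp at a1 a2 a3 b1 b2 b3
    have c1 : t.imJ * R.imK = t.imK * R.imJ := by linarith
    have c2 : t.imK * R.imI = t.imI * R.imK := by linarith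
    have c3 : t.imI * R.imJ = t.imJ * R.imI := by linarith
    have d1 : t.imJ * S.imK = t.imK * S.imJ := by linarith
    have d2 : t.imK * S.imI = t.imI * S.imK := by linarith
    have d3 : t.imI * S.imJ = t.imJ * S.imI := by linarith
    by_contra hc
    apply h
    have x1 : R.imJ * S.imK = R.imK * S.imJ ∧ R.imK * S.imI = R.imI * S.imK ∧
        R.imI * S.imJ = R.imJ * S.imI := by
      by_cases k1 : t.imI = 0
      · by_cases k2 : t.imJ = 0
        · by_cases k3 : t.imK = 0
          · exact absurd ⟨k1, k2, k3⟩ hc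
          · exact par3 k3 c1 c2 c3 d1 d2 d3
        · obtain ⟨z1, z2, z3⟩ := par3 k2 c3 c1 c2 d3 d1 d2
          exact ⟨z2, z3, z1⟩
      · obtain ⟨z1, z2, z3⟩ := par3 k1 c2 c3 c1 d2 d3 d1
        exact ⟨z3, z1, z2⟩
    ext <;> simp <;> linarith [x1.1, x1.2.1, x1.2.2]
  have e := nsq_expand ht
  rw [key.1, key.2.1, key.2.2] at e
  have : (t.re - 1) * (t.re + 1) = 0 := by linarith
  rcases mul_eq_zero.1 this with h | h
  · left; rw [one_mkq]; ext <;> simp [key]; linarith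
  · right; rw [one_mkq]; ext <;> simp [key]; linarith

theorem h_noncomm {y : HH} {D : ℝ} (h : Quaternion.normSq y = 1) (h0 : 0 < D) (h1 : D ≤ 1) :
    hR y D * hS y D ≠ hS y D * hR y D := by
  intro hc
  have e := h_comm h h0.le h1
  rw [hc, mul_assoc (hS y D), mul_star_unit (hR_unit h h0.le h1), mul_one,
    mul_star_unit (hS_unit h h0.le h1)] at e
  rw [one_mkq] at e
  have e2 := congrArg (fun q : HH => q.re) e
  have e3 := nsq_expand (g0_unit h0.le h1)
  simp [g0] at e2 e3
  nlinarith

end PC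

section PD

def ca (y : HH) : ℂ := ⟨y.re, y.imK⟩
def cb (y : HH) : ℂ := ⟨y.imI, y.imJ⟩
def rho (y : HH) : ℂ := ca y ^ 4 - conj (cb y) ^ 4

theorem ca_re (y : HH) : (ca y).re = y.re := rfl
theorem ca_im (y : HH) : (ca y).im = y.imK := rfl
theorem cb_re (y : HH) : (cb y).re = y.imI := rfl
theorem cb_im (y : HH) : (cb y).im = y.imJ := rfl

theorem cb_rr1 (y : HH) : cb (rr1 y) = conj (ca y) ^ 2 + cb y ^ 2 := by
  apply Complex.ext <;> simp [rr1, qi, ca_re, ca_im, cb_re, cb_im, pow_two] <;> ring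
theorem cb_rr2 (y : HH) : cb (rr2 y) = Complex.I * (conj (ca y) ^ 2 - cb y ^ 2) := by
  apply Complex.ext <;> simp [rr2, qj, ca_re, ca_im, cb_re, cb_im, pow_two] <;> ring
theorem rho_eq (y : HH) : rho y = Complex.I * conj (cb (rr1 y)) * conj (cb (rr2 y)) := by
  rw [cb_rr1, cb_rr2, rho]; simp
  linear_combination (ca y ^ 4 - conj (cb y) ^ 4) * Complex.I_mul_I

theorem refl_of_sq {v r : ℂ} {x : ℝ} (hx : 0 ≤ x) (h : v ^ 2 * r = x) :
    r * v = (‖r‖ : ℂ) * conj v := by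
  by_cases hv : v = 0
  · simp [hv]
  have h1 : x = ‖v‖ ^ 2 * ‖r‖ := by
    have := congrArg norm h
    rw [norm_mul, norm_pow, Complex.norm_real, Real.norm_of_nonneg hx] at this
    exact this.symm
  have h2 : conj v * v = (‖v‖ : ℂ) ^ 2 := Complex.conj_mul' v
  have hn : (‖v‖ : ℂ) ^ 2 ≠ 0 := by
    simpa using hv
  apply mul_left_cancel₀ hn
  rw [h1] at h; push_cast at h
  linear_combination conj v * h - (r * v) * h2

variable {y : HH}

theorem hS_zero (h : Quaternion.normSq y = 1) : hS y 0 = -(qk * PP y 0) := by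
  obtain ⟨a, b, c, d, e⟩ := PP_facts h le_rfl zero_le_one
  have hg : g0 0 = qk := by
    have e : 2 * cc 0 * ss 0 = 1 := by
      have : cc 0 = ss 0 := by simp [cc, ss]
      have h2 := ss_sq (D := 0) zero_le_one
      rw [this]; linarith
    rw [g0, e, qk]
  rw [hg] at e
  have hk : (hR y 0).imK = 0 := by
    rw [hR]; generalize PP y 0 * QQ y 0 = R at *
    simpa [qk] using e
  have e1 : star (hR y 0) * qk = qk * hR y 0 := by
    ext <;> simp [qk, hk]
  rw [hS, hg, e1, hR]
  have : qk * (PP y 0 * QQ y 0) * QQ y 0 = qk * (PP y 0 * (QQ y 0 * QQ y 0)) := by noncomm_ring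
  rw [this, imag_sq d b]; simp

theorem hT_zero (h : Quaternion.normSq y = 1) : hR y 0 * hS y 0 = qk * QQ y 0 := by
  have hg : g0 0 = qk := by
    have e : 2 * cc 0 * ss 0 = 1 := by
      have : cc 0 = ss 0 := by simp [cc, ss]
      have h2 := ss_sq (D := 0) zero_le_one
      rw [this]; linarith
    rw [g0, e, qk]
  rw [hRS h le_rfl zero_le_one, hg]

theorem D0_core {A B x y : ℝ} {p q r : ℂ} (hA : 0 ≤ A) (hB : 0 ≤ B) (h : x ^ 2 + y ^ 2 ≤ 1)
    (hp : p * conj p = ((1 - x ^ 2 : ℝ) : ℂ)) (hq : q * conj q = ((1 - y ^ 2 : ℝ) : ℂ))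
    (hpq : p * conj q + q * conj p = ((-2 * x * y : ℝ) : ℂ))
    (hr : r = Complex.I * conj p * conj q)
    (hAB : A ^ 2 * (1 - x ^ 2) = B ^ 2 * (1 - y ^ 2)) :
    ∃ s t : ℝ, 0 ≤ s ∧ 0 ≤ t ∧ -Complex.I * (A * p + B * q) ^ 2 * r = s ∧
      Complex.I * (A * p - B * q) ^ 2 * r = t := by
  have hAB' : (A : ℂ) ^ 2 * (1 - x ^ 2) = B ^ 2 * (1 - y ^ 2) := by exact_mod_cast hAB
  have hI := Complex.I_mul_I
  push_cast at hp hq hpq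
  have hx : 0 ≤ 1 - x ^ 2 := by nlinarith [sq_nonneg y]
  have hy : 0 ≤ 1 - y ^ 2 := by nlinarith [sq_nonneg x]
  set K := A ^ 2 * (1 - x ^ 2) with hK
  set L := A * B * ((1 - x ^ 2) * (1 - y ^ 2)) with hL
  have hL0 : 0 ≤ L := by positivity
  have hKL : (K * x * y) ^ 2 ≤ L ^ 2 := by
    have e1 : (K * x * y) ^ 2 = A ^ 2 * B ^ 2 * ((1 - x ^ 2) * (1 - y ^ 2)) * (x ^ 2 * y ^ 2) := by
      have : (K * x * y) ^ 2 = K * K * (x ^ 2 * y ^ 2) := by ring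
      rw [this]; nth_rewrite 2 [hAB]; rw [hK]; ring
    have e2 : L ^ 2 = A ^ 2 * B ^ 2 * ((1 - x ^ 2) * (1 - y ^ 2)) * ((1 - x ^ 2) * (1 - y ^ 2)) := by
      rw [hL]; ring
    rw [e1, e2]
    apply mul_le_mul_of_nonneg_left _ (by positivity)
    nlinarith
  have habs := abs_le_of_sq_le_sq' hKL hL0
  refine ⟨2 * L - 2 * (K * x * y), 2 * L + 2 * (K * x * y), by linarith, by linarith, ?_, ?_⟩
  · rw [hr, hL, hK]; push_cast
    linear_combination (-(A * p + B * q) ^ 2 * conj p * conj q) * hI +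
      (A ^ 2 * p * conj q + 2 * A * B * q * conj q) * hp +
      (B ^ 2 * q * conj p + 2 * A * B * (1 - x ^ 2)) * hq + A ^ 2 * (1 - x ^ 2) * hpq
      - q * conj p * hAB'
  · rw [hr, hL, hK]; push_cast
    linear_combination ((A * p - B * q) ^ 2 * conj p * conj q) * hI -
      (A ^ 2 * p * conj q - 2 * A * B * q * conj q) * hp -
      (B ^ 2 * q * conj p - 2 * A * B * (1 - x ^ 2)) * hq - A ^ 2 * (1 - x ^ 2) * hpq
      + q * conj p * hAB'

structure AxData (S T : HH) (r : ℂ) : Prop where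
  sk : S.imK = 0
  tk : T.imK = 0
  rs : r * cb S = (‖r‖ : ℂ) * conj (cb S)
  rt : r * cb T = (‖r‖ : ℂ) * conj (cb T)
  z : r = 0 → cb S = 0 ∧ cb T = 0
  nz : r ≠ 0 → cb S ≠ 0 ∨ cb T ≠ 0

theorem axdata (h : Quaternion.normSq y = 1) :
    AxData (hS y 0) (hR y 0 * hS y 0) (rho y) := by
  have hn : nx y ^ 2 + ny y ^ 2 ≤ 1 := by nlinarith [nxyz h, sq_nonneg (nz y)]
  have dp := den_pos (le_refl (0:ℝ)) zero_le_one hn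
  have a1 := nsq_expand (nsq_rr1 h)
  have a2 := nsq_expand (nsq_rr2 h)
  have a3 := rr_orth y
  have e1 := AA_sq (le_refl (0:ℝ)) zero_le_one hn
  have e2 := AA_sq (le_refl (0:ℝ)) zero_le_one (x := ny y) (y := nx y) (by linarith)
  have e3 := AB_one (le_refl (0:ℝ)) zero_le_one hn
  rw [rr1_re, rr1_k] at a1
  rw [rr2_re, rr2_k] at a2
  rw [rr1_k, rr2_k] at a3
  have cs : cc 0 = ss 0 := by simp [cc, ss]
  have s2 := ss_sq (D := 0) zero_le_one
  have s2' : (ss 0 : ℂ) ^ 2 * 2 = 1 := by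
    have : ss 0 ^ 2 * 2 = 1 := by linarith
    exact_mod_cast this
  have hI := Complex.I_mul_I
  obtain ⟨a, b, c, d, e⟩ := PP_facts h le_rfl zero_le_one
  set A := AA 0 (nx y) (ny y) with hA
  set B := AA 0 (ny y) (nx y) with hB
  have cS : cb (hS y 0) = -Complex.I * (ss 0 * (1 + Complex.I)) *
      (A * cb (rr1 y) + B * cb (rr2 y)) := by
    rw [hS_zero h]
    apply Complex.ext <;> simp [cb_re, cb_im, qk, PP, Pof, rotp, UU, VV, cs, ← hA, ← hB] <;> ring
  have cT : cb (hR y 0 * hS y 0) = Complex.I * (ss 0 * (1 - Complex.I)) *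
      (A * cb (rr1 y) - B * cb (rr2 y)) := by
    rw [hT_zero h]
    apply Complex.ext <;> simp [cb_re, cb_im, qk, QQ, Qof, rotp, UU, VV, cs, ← hA, ← hB] <;> ring
  have hp : cb (rr1 y) * conj (cb (rr1 y)) = ((1 - nx y ^ 2 : ℝ) : ℂ) := by
    rw [Complex.mul_conj, Complex.normSq_apply, cb_re, cb_im]; congr 1; linarith
  have hq : cb (rr2 y) * conj (cb (rr2 y)) = ((1 - ny y ^ 2 : ℝ) : ℂ) := by
    rw [Complex.mul_conj, Complex.normSq_apply, cb_re, cb_im]; congr 1; linarith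
  have hpq : cb (rr1 y) * conj (cb (rr2 y)) + cb (rr2 y) * conj (cb (rr1 y)) =
      ((-2 * nx y * ny y : ℝ) : ℂ) := by
    apply Complex.ext <;> simp [cb_re, cb_im] <;> linarith
  have hr := rho_eq y
  have hAB : A ^ 2 * (1 - nx y ^ 2) = B ^ 2 * (1 - ny y ^ 2) := by
    apply mul_right_cancel₀ dp.ne'
    linear_combination (1 - nx y ^ 2) * e1 - (1 - ny y ^ 2) * e2
  obtain ⟨s, t, hs, ht, ks, kt⟩ := D0_core (AA_nonneg _ _ _) (AA_nonneg _ _ _) hn hp hq hpq hr hAB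
  rw [← hA, ← hB] at ks kt
  have f0 : (ss 0 : ℂ) ≠ 0 := by intro hh; rw [hh] at s2'; norm_num at s2'
  have f1 : (1 + Complex.I) ≠ 0 := by intro hh; simpa using congrArg Complex.re hh
  have f2 : (1 - Complex.I) ≠ 0 := by intro hh; simpa using congrArg Complex.re hh
  refine ⟨?_, ?_, ?_, ?_, ?_, ?_⟩
  · rw [hS_zero h]; simp [qk, c]
  · rw [hT_zero h]; simp [qk, d]
  · apply refl_of_sq hs
    rw [← ks, cS]
    generalize (A * cb (rr1 y) + B * cb (rr2 y) : ℂ) = w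
    linear_combination w ^ 2 * rho y * ((ss 0 : ℂ) ^ 2 * (1 + Complex.I) ^ 2 * hI - (ss 0 : ℂ) ^ 2 * hI - Complex.I * s2')
  · apply refl_of_sq ht
    rw [← kt, cT]
    generalize (A * cb (rr1 y) - B * cb (rr2 y) : ℂ) = w
    linear_combination w ^ 2 * rho y * ((ss 0 : ℂ) ^ 2 * (1 - Complex.I) ^ 2 * hI - (ss 0 : ℂ) ^ 2 * hI + Complex.I * s2')
  · intro hz
    rw [hr] at hz
    simp only [mul_eq_zero, Complex.I_ne_zero, false_or, map_eq_zero] at hz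
    rcases hz with hz | hz
    · rw [hz] at hp
      have : 1 - nx y ^ 2 = 0 := by
        have : ((1 - nx y ^ 2 : ℝ) : ℂ) = 0 := by rw [← hp]; simp
        exact_mod_cast this
      have hB0 : B = 0 := by
        have : B ^ 2 * (2 - (1 - 0) * (ny y ^ 2 + nx y ^ 2)) = 0 := by rw [e2]; linarith
        rcases mul_eq_zero.1 this with h | h
        · exact pow_eq_zero_iff two_ne_zero |>.1 h
        · linarith
      rw [cS, cT, hz, hB0]; simp
    · rw [hz] at hq
      have : 1 - ny y ^ 2 = 0 := by
        have : ((1 - ny y ^ 2 : ℝ) : ℂ) = 0 := by rw [← hq]; simp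
        exact_mod_cast this
      have hB0 : A = 0 := by
        have : A ^ 2 * (2 - (1 - 0) * (nx y ^ 2 + ny y ^ 2)) = 0 := by rw [e1]; linarith
        rcases mul_eq_zero.1 this with h | h
        · exact pow_eq_zero_iff two_ne_zero |>.1 h
        · linarith
      rw [cS, cT, hz, hB0]; simp
  · intro hz
    by_contra hc
    push Not at hc
    rw [cS, cT] at hc
    rw [hr] at hz
    simp only [ne_eq, mul_eq_zero, Complex.I_ne_zero, false_or, map_eq_zero, not_or, neg_eq_zero, f0, f1, f2] at hz hc
    have g1 : (A : ℂ) * cb (rr1 y) = 0 := by linear_combination (hc.1 + hc.2) / 2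
    have g2 : (B : ℂ) * cb (rr2 y) = 0 := by linear_combination (hc.1 - hc.2) / 2
    have g3 : A = 0 := by simpa [hz.1] using g1
    have g4 : B = 0 := by simpa [hz.2] using g2
    rw [g3, g4] at e3; norm_num at e3

end PD

section PE

def mf (D : ℝ) (l : ℂ) : ℂ := D + (1 - D) * (‖l‖ + l) / 2

theorem unit_conj {k : ℂ} (hk : ‖k‖ = 1) : k * conj k = 1 := by
  rw [Complex.mul_conj']; simp [hk]

theorem exists_sigma (l : ℂ) : ∃ s : ℂ, ‖s‖ = 1 ∧ l = ‖l‖ * conj s ^ 2 := by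
  by_cases h : l = 0
  · exact ⟨1, by simp, by simp [h]⟩
  obtain ⟨t, ht⟩ := IsAlgClosed.exists_pow_nat_eq (l / ‖l‖) (n := 2) (by norm_num)
  have hl : (‖l‖ : ℂ) ≠ 0 := by simpa using h
  have hn : ‖t‖ = 1 := by
    have := congrArg norm ht
    rw [norm_pow, norm_div, Complex.norm_real, norm_norm, div_self (by simpa using h)] at this
    exact (pow_eq_one_iff_of_nonneg (norm_nonneg _) two_ne_zero).1 this
  refine ⟨conj t, by simpa using hn, ?_⟩
  rw [Complex.conj_conj, ht]; field_simp

theorem sqrt_unit {k : ℂ} (hk : ‖k‖ = 1) : ∃ t : ℂ, ‖t‖ = 1 ∧ t ^ 2 = k := by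
  obtain ⟨s, hs, h⟩ := exists_sigma k
  refine ⟨conj s, by simpa using hs, ?_⟩
  rw [hk] at h; rw [h]; simp

theorem mf_sigma {D : ℝ} {l k s : ℂ} (hk : ‖k‖ = 1) (hs : ‖s‖ = 1) (hl : l = ‖l‖ * conj s ^ 2) :
    mf D (k ^ 2 * l) * conj k * s =
      D * (conj k * s) + (1 - D) * ‖l‖ * ((conj k * s).re : ℂ) := by
  have hn : ‖k ^ 2 * l‖ = ‖l‖ := by rw [norm_mul, norm_pow, hk]; simp
  have h1 := unit_conj hk
  have h2 := unit_conj hs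
  have hre : ((conj k * s).re : ℂ) = (conj k * s + k * conj s) / 2 := by
    rw [Complex.re_eq_add_conj]; simp
  rw [hre, mf, hn]
  generalize hτ : (‖l‖ : ℂ) = τ at *
  rw [hl]
  linear_combination ((1 - D) * τ * k * conj s * (s * conj s) / 2) * h1
    + ((1 - D) * τ * k * conj s / 2) * h2

theorem uniq_aux {D E τ a b c d : ℝ} (hD : 0 ≤ D) (_hE : E ≤ 1) (hDE : D < E) (ht : 0 ≤ τ)
    (ht1 : τ < 1) (h1 : a ^ 2 + b ^ 2 = 1) (h2 : c ^ 2 + d ^ 2 = 1) (e1 : D * b = E * d)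
    (e2 : (D + (1 - D) * τ) * a = (E + (1 - E) * τ) * c) : False := by
  set F := D + (1 - D) * τ with hF
  set G := E + (1 - E) * τ with hG
  have hFG : F < G := by rw [hF, hG]; nlinarith
  have hF0 : 0 ≤ F := by rw [hF]; nlinarith
  have s1 : D ^ 2 * b ^ 2 = E ^ 2 * d ^ 2 := by rw [← mul_pow, ← mul_pow, e1]
  have s2 : F ^ 2 * a ^ 2 = G ^ 2 * c ^ 2 := by rw [← mul_pow, ← mul_pow, e2]
  have hE0 : 0 < E := by linarith
  have hG0 : 0 < G := by linarith
  have q1 : D ^ 2 < E ^ 2 := by nlinarith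
  have q2 : F ^ 2 < G ^ 2 := by nlinarith
  have r1 : d ^ 2 ≤ b ^ 2 := by
    have : E ^ 2 * d ^ 2 ≤ E ^ 2 * b ^ 2 := by rw [← s1]; nlinarith [sq_nonneg b]
    exact le_of_mul_le_mul_left this (by positivity)
  have r2 : c ^ 2 ≤ a ^ 2 := by
    have : G ^ 2 * c ^ 2 ≤ G ^ 2 * a ^ 2 := by rw [← s2]; nlinarith [sq_nonneg a]
    exact le_of_mul_le_mul_left this (by positivity)
  have r3 : d ^ 2 = b ^ 2 := by linarith
  have r4 : c ^ 2 = a ^ 2 := by linarith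
  rw [r3] at s1; rw [r4] at s2
  have z1 : b ^ 2 = 0 := by
    have : (E ^ 2 - D ^ 2) * b ^ 2 = 0 := by linarith
    rcases mul_eq_zero.1 this with h | h
    · linarith
    · exact h
  have z2 : a ^ 2 = 0 := by
    have : (G ^ 2 - F ^ 2) * a ^ 2 = 0 := by linarith
    rcases mul_eq_zero.1 this with h | h
    · linarith
    · exact h
  linarith

theorem mf_eq {D E : ℝ} {l k : ℂ} (hk : ‖k‖ = 1) (hD : 0 ≤ D) (hD1 : D ≤ 1) (hE : 0 ≤ E)
    (hE1 : E ≤ 1) (hl : ‖l‖ < 1) (h : mf D (k ^ 2 * l) = k * mf E l) :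
    D = E ∧ (0 < D → k = 1) ∧ (D = 0 → l = 0 ∨ k = 1 ∨ k * l = ‖l‖) := by
  obtain ⟨s, hs, e⟩ := exists_sigma l
  have m1 := mf_sigma (D := D) hk hs e
  have m2 := mf_sigma (D := E) (k := 1) (by simp) hs e
  simp only [one_pow, one_mul, map_one, mul_one] at m2
  have h1 := unit_conj hk
  have h2 := unit_conj hs
  have m3 : mf D (k ^ 2 * l) * conj k * s = mf E l * s := by
    rw [h]; linear_combination (mf E l * s) * h1
  rw [m1, m2] at m3
  generalize hp : conj k * s = p at m3
  have hpn : ‖p‖ = 1 := by rw [← hp, norm_mul]; simp [hk, hs]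
  have n1 : p.re ^ 2 + p.im ^ 2 = 1 := by
    have := Complex.sq_norm p; rw [hpn, Complex.normSq_apply] at this; linarith
  have n2 : s.re ^ 2 + s.im ^ 2 = 1 := by
    have := Complex.sq_norm s; rw [hs, Complex.normSq_apply] at this; linarith
  have i1 := congrArg Complex.im m3
  have i2 := congrArg Complex.re m3
  simp at i1 i2
  have i3 : (D + (1 - D) * ‖l‖) * p.re = (E + (1 - E) * ‖l‖) * s.re := by linarith
  have hDE : D = E := by
    rcases lt_trichotomy D E with h | h | h
    · exact (uniq_aux hD hE1 h (norm_nonneg l) hl n1 n2 i1 i3).elim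
    · exact h
    · exact (uniq_aux hE hD1 h (norm_nonneg l) hl n2 n1 i1.symm i3.symm).elim
  refine ⟨hDE, ?_, ?_⟩
  · intro h0
    rw [← hDE] at i1 i3
    have j1 := mul_left_cancel₀ h0.ne' i1
    have : 0 < D + (1 - D) * ‖l‖ := by nlinarith [norm_nonneg l]
    have j2 := mul_left_cancel₀ this.ne' i3
    have : p = s := Complex.ext j2 j1
    rw [← hp] at this
    linear_combination -k * conj s * this + s * conj s * h1 + (-k + 1) * h2
  · intro h0
    by_cases hl0 : l = 0
    · exact Or.inl hl0
    right
    rw [← hDE, h0] at h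
    have hn : ‖k ^ 2 * l‖ = ‖l‖ := by rw [norm_mul, norm_pow, hk]; simp
    simp only [mf, hn] at h
    have : (1 - k) * (‖l‖ - k * l) = 0 := by
      push_cast at h
      linear_combination 2 * h
    rcases mul_eq_zero.1 this with h | h
    · left; linear_combination -h
    · right; linear_combination -h

theorem mf_conv {l k : ℂ} (hk : ‖k‖ = 1) (h : l = 0 ∨ k = 1 ∨ k * l = ‖l‖) :
    mf 0 (k ^ 2 * l) = k * mf 0 l := by
  rcases h with h | h | h
  · rw [h]; simp [mf]
  · rw [h]; simp
  · have hn : ‖k ^ 2 * l‖ = ‖l‖ := by rw [norm_mul, norm_pow, hk]; simp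
    simp only [mf, hn]
    push_cast
    linear_combination (k / 2 - 1 / 2) * h

theorem exist_aux {τ X Y : ℝ} (ht : 0 ≤ τ) (ht1 : τ < 1) (h : X ^ 2 + Y ^ 2 ≤ 1) :
    ∃ D a b : ℝ, 0 ≤ D ∧ D ≤ 1 ∧ a ^ 2 + b ^ 2 = 1 ∧ (D + (1 - D) * τ) * a = X ∧ D * b = Y := by
  by_cases hY : Y = 0
  · by_cases hX : |X| ≤ τ
    · by_cases h0 : τ = 0
      · refine ⟨0, 1, 0, le_rfl, zero_le_one, by norm_num, ?_, by simp [hY]⟩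
        have : |X| ≤ 0 := by rw [h0] at hX; exact hX
        have := abs_nonpos_iff.1 this
        rw [h0, this]; simp
      · have hp : 0 < τ := lt_of_le_of_ne ht (Ne.symm h0)
        have : (X / τ) ^ 2 ≤ 1 := by
          rw [div_pow, div_le_one (by positivity)]
          exact sq_le_sq.2 (by rwa [abs_of_pos hp])
        refine ⟨0, X / τ, √(1 - (X / τ) ^ 2), le_rfl, zero_le_one, ?_, ?_, by simp [hY]⟩
        · rw [Real.sq_sqrt (by linarith)]; ring
        · field_simp; ring
    · push Not at hX
      have hX1 : |X| ≤ 1 := by rw [hY] at h; exact abs_le_one_iff_mul_self_le_one.2 (by linarith)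
      have hd : 0 < 1 - τ := by linarith
      have key : (|X| - τ) / (1 - τ) + (1 - (|X| - τ) / (1 - τ)) * τ = |X| := by
        field_simp; ring
      refine ⟨(|X| - τ) / (1 - τ), if 0 ≤ X then 1 else -1, 0, div_nonneg (by linarith) hd.le,
        (div_le_one hd).2 (by linarith), by split_ifs <;> norm_num, ?_, by simp [hY]⟩
      rw [key]
      split_ifs with hx
      · rw [abs_of_nonneg hx]; ring
      · rw [abs_of_neg (by linarith)]; ring
  · by_cases h0 : τ = 0
    · have hp : 0 < X ^ 2 + Y ^ 2 := by positivity
      have hs := Real.sqrt_pos.2 hp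
      have hq := Real.sq_sqrt hp.le
      refine ⟨√(X ^ 2 + Y ^ 2), X / √(X ^ 2 + Y ^ 2), Y / √(X ^ 2 + Y ^ 2), hs.le,
        Real.sqrt_le_one.2 h, ?_, ?_, ?_⟩
      · rw [div_pow, div_pow, hq]; field_simp
      · rw [h0]; field_simp; ring
      · field_simp
    · have hp : 0 < τ := lt_of_le_of_ne ht (Ne.symm h0)
      let Φ : ℝ → ℝ := fun D => D ^ 2 * (D + (1 - D) * τ) ^ 2 - X ^ 2 * D ^ 2
        - Y ^ 2 * (D + (1 - D) * τ) ^ 2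
      have hc : ContinuousOn Φ (Set.Icc 0 1) := by
        apply Continuous.continuousOn; fun_prop
      have h00 : Φ 0 ≤ 0 := by
        simp only [Φ]; nlinarith [sq_nonneg (Y * τ)]
      have h11 : 0 ≤ Φ 1 := by simp only [Φ]; nlinarith
      obtain ⟨D, ⟨hD0, hD1⟩, hD⟩ := intermediate_value_Icc zero_le_one hc ⟨h00, h11⟩
      have hDne : D ≠ 0 := by
        intro hh
        rw [hh] at hD
        simp only [Φ] at hD
        have : Y ^ 2 * τ ^ 2 = 0 := by linarith
        have : 0 < Y ^ 2 * τ ^ 2 := by positivity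
        linarith
      have hE : 0 < D + (1 - D) * τ := by
        have : 0 < D := lt_of_le_of_ne hD0 (Ne.symm hDne)
        nlinarith
      simp only [Φ] at hD
      refine ⟨D, X / (D + (1 - D) * τ), Y / D, hD0, hD1, ?_, ?_, ?_⟩
      · rw [div_pow, div_pow, div_add_div _ _ (by positivity) (by positivity), div_eq_one_iff_eq (by positivity)]
        linarith
      · field_simp
      · field_simp

theorem mf_surj {l m0 : ℂ} (hl : ‖l‖ < 1) (hm : ‖m0‖ ≤ 1) :
    ∃ (D : ℝ) (k : ℂ), 0 ≤ D ∧ D ≤ 1 ∧ ‖k‖ = 1 ∧ mf D (k ^ 2 * l) = k * m0 := by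
  obtain ⟨s, hs, e⟩ := exists_sigma l
  have h2 := unit_conj hs
  have hn : ‖m0 * s‖ ≤ 1 := by rw [norm_mul, hs]; simpa using hm
  have hn2 : (m0 * s).re ^ 2 + (m0 * s).im ^ 2 ≤ 1 := by
    have := Complex.sq_norm (m0 * s); rw [Complex.normSq_apply] at this
    nlinarith [norm_nonneg (m0 * s)]
  obtain ⟨D, a, b, h0, h1, hab, e1, e2⟩ := exist_aux (norm_nonneg l) hl hn2
  have hp : ‖(⟨a, b⟩ : ℂ)‖ = 1 := by
    have := Complex.sq_norm (⟨a, b⟩ : ℂ); rw [Complex.normSq_apply] at this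
    simp only at this
    exact (pow_eq_one_iff_of_nonneg (norm_nonneg _) two_ne_zero).1 (by linarith)
  generalize hpp : (⟨a, b⟩ : ℂ) = p at hp
  have hk : ‖conj p * s‖ = 1 := by rw [norm_mul]; simp [hp, hs]
  refine ⟨D, conj p * s, h0, h1, hk, ?_⟩
  have m1 := mf_sigma (D := D) hk hs e
  have hps : conj (conj p * s) * s = p := by
    simp; linear_combination p * h2
  have h3 := unit_conj hk
  rw [mul_assoc, hps] at m1
  have m2 : mf D ((conj p * s) ^ 2 * l) * p = m0 * s := by
    rw [m1, ← hpp]; apply Complex.ext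
    · rw [← e1]; simp; ring
    · rw [← e2]; simp
  have h4 := unit_conj hp
  linear_combination (conj p) * m2 - (mf D ((conj p * s) ^ 2 * l)) * h4

end PE

section PF

def zz (y1 y2 : HH) (m : ℂ) : Fin 4 → ℂ :=
  ![ca y1 * conj (ca y2) + m * cb y1 * conj (cb y2),
    -(ca y1 * cb y2) + m * cb y1 * ca y2,
    -(conj (cb y1) * conj (ca y2)) + m * conj (ca y1) * conj (cb y2),
    conj (cb y1) * cb y2 + m * conj (ca y1) * ca y2]

def lam (y1 y2 : HH) : ℂ := rho y1 * conj (rho y2) / 2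
def mm (y1 y2 : HH) (D : ℝ) : ℂ := mf D (lam y1 y2)

theorem ca_mul (x y : HH) : ca (x * y) = ca x * ca y - cb x * conj (cb y) := by
  apply Complex.ext <;> simp [ca_re, ca_im, cb_re, cb_im] <;> ring
theorem cb_mul (x y : HH) : cb (x * y) = ca x * cb y + cb x * conj (ca y) := by
  apply Complex.ext <;> simp [ca_re, ca_im, cb_re, cb_im] <;> ring
theorem ca_star (x : HH) : ca (star x) = conj (ca x) := by
  apply Complex.ext <;> simp [ca_re, ca_im]
theorem cb_star (x : HH) : cb (star x) = -cb x := by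
  apply Complex.ext <;> simp [cb_re, cb_im]
theorem cab_unit {y : HH} (h : Quaternion.normSq y = 1) :
    ca y * conj (ca y) + cb y * conj (cb y) = 1 := by
  have := nsq_expand h
  rw [Complex.mul_conj, Complex.mul_conj, Complex.normSq_apply, Complex.normSq_apply, ca_re, ca_im,
    cb_re, cb_im]
  have e : (y.re * y.re + y.imK * y.imK) + (y.imI * y.imI + y.imJ * y.imJ) = 1 := by linarith
  exact_mod_cast e
theorem cab_unit' {y : HH} (h : Quaternion.normSq y = 1) : ‖ca y‖ ^ 2 + ‖cb y‖ ^ 2 = 1 := by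
  have := nsq_expand h
  rw [Complex.sq_norm, Complex.sq_norm, Complex.normSq_apply, Complex.normSq_apply, ca_re, ca_im,
    cb_re, cb_im]
  linarith
theorem cab_ext {x y : HH} (h1 : ca x = ca y) (h2 : cb x = cb y) : x = y := by
  have a1 := congrArg Complex.re h1
  have a2 := congrArg Complex.im h1
  have a3 := congrArg Complex.re h2
  have a4 := congrArg Complex.im h2
  ext
  exacts [a1, a3, a4, a2]

def ofc (a b : ℂ) : HH := mkq a.re b.re b.im a.im
theorem ca_ofc (a b : ℂ) : ca (ofc a b) = a := rfl
theorem cb_ofc (a b : ℂ) : cb (ofc a b) = b := rfl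
theorem ofc_unit {a b : ℂ} (h : ‖a‖ ^ 2 + ‖b‖ ^ 2 = 1) : Quaternion.normSq (ofc a b) = 1 := by
  rw [Complex.sq_norm, Complex.sq_norm, Complex.normSq_apply, Complex.normSq_apply] at h
  rw [Quaternion.normSq_def']; simp only [ofc, mkq_re, mkq_imI, mkq_imJ, mkq_imK]; linarith

theorem IsG.cb {u : HH} (h : IsG u) : cb u = 0 := by
  apply Complex.ext
  · exact h.1
  · exact h.2.1
theorem IsG.ca {u : HH} (h : IsG u) : ‖ca u‖ = 1 := by
  have := cab_unit' h.2.2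
  rw [h.cb] at this; simp at this
  rcases this with h | h
  · exact h
  · have := norm_nonneg (_root_.ca u); linarith
theorem isG_of {u : HH} (h : Quaternion.normSq u = 1) (hb : cb u = 0) : IsG u :=
  ⟨congrArg Complex.re hb, congrArg Complex.im hb, h⟩
theorem isG_ofc {a : ℂ} (h : ‖a‖ = 1) : IsG (ofc a 0) :=
  isG_of (ofc_unit (by simp [h])) rfl

theorem ca_g (y : HH) {u : HH} (h : IsG u) : ca (y * u) = ca y * ca u := by
  rw [ca_mul, h.cb]; simp
theorem cb_g (y : HH) {u : HH} (h : IsG u) : cb (y * u) = cb y * conj (ca u) := by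
  rw [cb_mul, h.cb]; simp
theorem rho_g (y : HH) {u : HH} (h : IsG u) : rho (y * u) = ca u ^ 4 * rho y := by
  rw [rho, ca_g y h, cb_g y h, rho]; simp; ring

def kap (u1 u2 : HH) : ℂ := ca u1 * conj (ca u2)
theorem kap_unit {u1 u2 : HH} (h1 : IsG u1) (h2 : IsG u2) : ‖kap u1 u2‖ = 1 := by
  rw [kap, norm_mul, h1.ca]; simp [h2.ca]

theorem lam_g (y1 y2 : HH) {u1 u2 : HH} (h1 : IsG u1) (h2 : IsG u2) :
    lam (y1 * u1) (y2 * u2) = (kap u1 u2 ^ 2) ^ 2 * lam y1 y2 := by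
  rw [lam, rho_g y1 h1, rho_g y2 h2, lam, kap]; simp; ring

theorem zz_g (y1 y2 : HH) {u1 u2 : HH} (h1 : IsG u1) (h2 : IsG u2) (m : ℂ) :
    zz (y1 * u1) (y2 * u2) (kap u1 u2 ^ 2 * m) = kap u1 u2 • zz y1 y2 m := by
  have e1 := unit_conj h1.ca
  have e2 := unit_conj h2.ca
  have k : kap u1 u2 ^ 2 * conj (ca u1) * ca u2 = kap u1 u2 := by
    rw [kap]
    linear_combination (ca u1 * conj (ca u2)) * ((ca u2 * conj (ca u2)) * e1 + e2)
  have hk : ca u1 * conj (ca u2) = kap u1 u2 := rfl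
  ext i; fin_cases i <;> simp [zz, ca_g _ h1, ca_g _ h2, cb_g _ h1, cb_g _ h2]
  · linear_combination m * cb y1 * conj (cb y2) * k + ca y1 * conj (ca y2) * hk
  · linear_combination m * cb y1 * (ca y2) * k - ca y1 * (cb y2) * hk
  · linear_combination m * conj (ca y1) * conj (cb y2) * k - conj (cb y1) * conj (ca y2) * hk
  · linear_combination m * conj (ca y1) * (ca y2) * k + conj (cb y1) * (cb y2) * hk

theorem rho_le {y : HH} (h : Quaternion.normSq y = 1) : ‖rho y‖ ≤ 1 := by
  have e := cab_unit' h
  calc ‖rho y‖ ≤ ‖ca y ^ 4‖ + ‖conj (cb y) ^ 4‖ := norm_sub_le _ _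
    _ = ‖ca y‖ ^ 4 + ‖cb y‖ ^ 4 := by simp [norm_pow]
    _ ≤ 1 := by nlinarith [sq_nonneg ‖ca y‖, sq_nonneg ‖cb y‖, mul_nonneg (sq_nonneg ‖ca y‖) (sq_nonneg ‖cb y‖)]

theorem lam_lt {y1 y2 : HH} (h1 : Quaternion.normSq y1 = 1) (h2 : Quaternion.normSq y2 = 1) :
    ‖lam y1 y2‖ < 1 := by
  have a := rho_le h1
  have b := rho_le h2
  rw [lam, norm_div, norm_mul, RCLike.norm_conj]
  have : ‖(2:ℂ)‖ = 2 := by simp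
  rw [this]
  nlinarith [norm_nonneg (rho y1), norm_nonneg (rho y2)]

theorem mf_lt {D : ℝ} {l : ℂ} (h0 : 0 ≤ D) (h1 : D < 1) (hl : ‖l‖ < 1) : ‖mf D l‖ < 1 := by
  have : mf D l = (D : ℂ) + ((1 - D : ℝ) : ℂ) * ((‖l‖ : ℂ) + l) / 2 := by simp [mf]
  rw [this]
  have e1 : ‖(‖l‖ : ℂ) + l‖ ≤ 2 * ‖l‖ := by
    calc _ ≤ ‖(‖l‖ : ℂ)‖ + ‖l‖ := norm_add_le _ _
      _ = _ := by simp; ring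
  calc _ ≤ ‖(D : ℂ)‖ + ‖((1 - D : ℝ) : ℂ) * ((‖l‖ : ℂ) + l) / 2‖ := norm_add_le _ _
    _ = D + (1 - D) * ‖(‖l‖ : ℂ) + l‖ / 2 := by
      rw [norm_div, norm_mul, Complex.norm_real, Complex.norm_real, Real.norm_of_nonneg h0,
        Real.norm_of_nonneg (by linarith : 0 ≤ 1 - D)]; simp
    _ < 1 := by nlinarith [norm_nonneg l]
theorem mf_one (l : ℂ) : mf 1 l = 1 := by simp [mf]

theorem zz_eqs {y1 y2 y1' y2' : HH} {m m' κ : ℂ} (_h1 : Quaternion.normSq y1 = 1)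
    (h2 : Quaternion.normSq y2 = 1) (h1' : Quaternion.normSq y1' = 1)
    (_h2' : Quaternion.normSq y2' = 1) (h : zz y1 y2 m = κ • zz y1' y2' m') :
    ca (star y1' * y1) = κ * ca (star y2' * y2) ∧
    m * cb (star y1' * y1) = κ * cb (star y2' * y2) ∧
    conj (cb (star y1' * y1)) = κ * m' * conj (cb (star y2' * y2)) ∧
    m * conj (ca (star y1' * y1)) = κ * m' * conj (ca (star y2' * y2)) := by
  have z1 := congrFun h 0
  have z2 := congrFun h 1
  have z3 := congrFun h 2
  have z4 := congrFun h 3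
  simp [zz] at z1 z2 z3 z4
  have n2 := cab_unit h2
  have n1 := cab_unit h1'
  simp only [ca_mul, cb_mul, ca_star, cb_star, map_sub, map_add, map_mul, map_neg, Complex.conj_conj]
  generalize ca y1 = a1 at *
  generalize cb y1 = b1 at *
  generalize ca y2 = a2 at *
  generalize cb y2 = b2 at *
  generalize ca y1' = c1 at *
  generalize cb y1' = d1 at *
  generalize ca y2' = c2 at *
  generalize cb y2' = d2 at *
  refine ⟨?_, ?_, ?_, ?_⟩
  · linear_combination conj c1 * a2 * z1 - conj c1 * conj b2 * z2 - d1 * a2 * z3 + d1 * conj b2 * z4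
      - (conj c1 * a1 + d1 * conj b1) * n2 + κ * (conj c2 * a2 + d2 * conj b2) * n1
  · linear_combination conj c1 * b2 * z1 + conj c1 * conj a2 * z2 - d1 * b2 * z3 - d1 * conj a2 * z4
      - m * (conj c1 * b1 - d1 * conj a1) * n2 + κ * (conj c2 * b2 - d2 * conj a2) * n1
  · linear_combination -(conj d1 * a2 * z1 - conj d1 * conj b2 * z2 + c1 * a2 * z3 - c1 * conj b2 * z4)
      - (c1 * conj b1 - conj d1 * a1) * n2 + κ * m' * (c2 * conj b2 - conj d2 * a2) * n1
  · linear_combination (conj d1 * b2 * z1 + conj d1 * conj a2 * z2 + c1 * b2 * z3 + c1 * conj a2 * z4)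
      - m * (c1 * conj a1 + conj d1 * b1) * n2 + κ * m' * (c2 * conj a2 + conj d2 * b2) * n1

theorem proj_lt {y1 y2 y1' y2' : HH} {m m' κ : ℂ} (h1 : Quaternion.normSq y1 = 1)
    (h2 : Quaternion.normSq y2 = 1) (h1' : Quaternion.normSq y1' = 1)
    (h2' : Quaternion.normSq y2' = 1) (hκ : κ ≠ 0) (hm : ‖m‖ < 1) (hm' : ‖m'‖ ≤ 1)
    (h : zz y1 y2 m = κ • zz y1' y2' m') :
    ∃ u1 u2, IsG u1 ∧ IsG u2 ∧ y1 = y1' * u1 ∧ y2 = y2' * u2 ∧ m = kap u1 u2 ^ 2 * m' := by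
  obtain ⟨e1, e2, e3, e4⟩ := zz_eqs h1 h2 h1' h2' h
  have w1 : y1 = y1' * (star y1' * y1) := by rw [← mul_assoc, mul_star_unit h1', one_mul]
  have w2 : y2 = y2' * (star y2' * y2) := by rw [← mul_assoc, mul_star_unit h2', one_mul]
  have n1 := nsq_mul (nsq_star h1') h1
  have n2 := nsq_mul (nsq_star h2') h2
  generalize star y1' * y1 = u1 at *
  generalize star y2' * y2 = u2 at *
  have b2 : cb u2 = 0 := by
    by_contra hb
    have p3 := congrArg norm e3
    have p2 := congrArg norm e2
    simp only [norm_mul, RCLike.norm_conj] at p2 p3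
    rw [p3] at p2
    have q1 : 0 < ‖κ‖ * ‖cb u2‖ := mul_pos (norm_pos_iff.2 hκ) (norm_pos_iff.2 hb)
    have q2 : ‖m‖ * ‖m'‖ < 1 := by nlinarith [norm_nonneg m, norm_nonneg m']
    nlinarith
  have b1 : cb u1 = 0 := by
    rw [b2] at e3; simpa using e3
  have g1 := isG_of n1 b1
  have g2 := isG_of n2 b2
  refine ⟨u1, u2, g1, g2, w1, w2, ?_⟩
  have c1 := unit_conj g1.ca
  have c2 := unit_conj g2.ca
  have hk : kap u1 u2 = κ := by
    rw [kap, e1]; linear_combination κ * c2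
  rw [hk]
  linear_combination ca u1 * e4 + κ * m' * conj (ca u2) * e1 - m * c1 + κ ^ 2 * m' * c2

theorem zz_one (y1 y2 : HH) : zz y1 y2 1 = ![ca (y1 * star y2), cb (y1 * star y2),
    -conj (cb (y1 * star y2)), conj (ca (y1 * star y2))] := by
  ext i; fin_cases i <;> simp [zz, ca_mul, cb_mul, ca_star, cb_star] <;> ring

theorem proj_one {y1 y2 y1' y2' : HH} {κ : ℂ} (h1 : Quaternion.normSq y1 = 1)
    (h2 : Quaternion.normSq y2 = 1) (h1' : Quaternion.normSq y1' = 1)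
    (h2' : Quaternion.normSq y2' = 1) 
    (h : zz y1 y2 1 = κ • zz y1' y2' 1) :
    y1 * star y2 = y1' * star y2' ∨ y1 * star y2 = -(y1' * star y2') := by
  have n1 := cab_unit (nsq_mul h1 (nsq_star h2))
  have n2 := cab_unit (nsq_mul h1' (nsq_star h2'))
  rw [zz_one, zz_one] at h
  generalize y1 * star y2 = p at *
  generalize y1' * star y2' = q at *
  have z1 := congrFun h 0
  have z2 := congrFun h 1
  have z3 := congrFun h 2
  have z4 := congrFun h 3
  simp at z1 z2 z3 z4
  have hk : (κ - 1) * (κ + 1) = 0 := by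
    linear_combination n1 - κ ^ 2 * n2 - conj (ca p) * z1 - κ * ca q * z4 - conj (cb p) * z2
      - κ * cb q * z3
  rcases mul_eq_zero.1 hk with hk | hk
  · left
    have : κ = 1 := by linear_combination hk
    rw [this] at z1 z2
    exact cab_ext (by simpa using z1) (by simpa using z2)
  · right
    have : κ = -1 := by linear_combination hk
    rw [this] at z1 z2
    apply cab_ext
    · rw [z1]; apply Complex.ext <;> simp [ca_re, ca_im]
    · rw [z2]; apply Complex.ext <;> simp [cb_re, cb_im]

theorem proj_one_conv {y1 y2 y1' y2' : HH} 
    (h : y1 * star y2 = y1' * star y2' ∨ y1 * star y2 = -(y1' * star y2')) :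
    ∃ κ : ℂ, κ ≠ 0 ∧ zz y1 y2 1 = κ • zz y1' y2' 1 := by
  rcases h with h | h
  · exact ⟨1, one_ne_zero, by rw [zz_one, zz_one, h]; simp⟩
  · refine ⟨-1, by simp, ?_⟩
    rw [zz_one, zz_one, h]
    generalize y1' * star y2' = q
    have e1 : ca (-q) = - ca q := by apply Complex.ext <;> simp [ca_re, ca_im]
    have e2 : cb (-q) = - cb q := by apply Complex.ext <;> simp [cb_re, cb_im]
    ext i; fin_cases i <;> simp [e1, e2]

theorem zz_ne {y1 y2 : HH} (h1 : Quaternion.normSq y1 = 1)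
    (h2 : Quaternion.normSq y2 = 1) (m : ℂ) : zz y1 y2 m ≠ 0 := by
  intro h
  have n1 := cab_unit h1
  have n2 := cab_unit h2
  have z1 := congrFun h 0
  have z2 := congrFun h 1
  have z3 := congrFun h 2
  have z4 := congrFun h 3
  simp [zz] at z1 z2 z3 z4
  have a : ca y1 = 0 := by
    linear_combination ca y2 * z1 - conj (cb y2) * z2 - ca y1 * n2
  have b : conj (cb y1) = 0 := by
    linear_combination - ca y2 * z3 + conj (cb y2) * z4 - conj (cb y1) * n2
  rw [a] at n1; rw [b] at n1; simp at n1

end PF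

section PG

theorem cb_cnj (X : HH) {u : HH} (h : IsG u) : cb (star u * X * u) = conj (ca u) ^ 2 * cb X := by
  rw [cb_g _ h, cb_mul, ca_star, cb_star, h.cb]; simp; ring
theorem ca_cnj (X : HH) {u : HH} (h : IsG u) : ca (star u * X * u) = ca X := by
  rw [ca_g _ h, ca_mul, ca_star, cb_star, h.cb]; simp
  linear_combination ca X * unit_conj h.ca
theorem kap_sq_one {u1 u2 : HH} (h2 : IsG u2) (h : kap u1 u2 ^ 2 = 1) : ca u1 ^ 2 = ca u2 ^ 2 := by
  have e := unit_conj h2.ca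
  rw [kap] at h
  linear_combination ca u2 ^ 2 * h - ca u1 ^ 2 * (ca u2 * conj (ca u2) + 1) * e

theorem ca_t (a : ℂ) (ha : ‖a‖ = 1) {X : HH} (hx : X.imK = 0) :
    ca (star (ofc 0 a) * X * ofc 0 a) = ca X := by
  have e := unit_conj ha
  have hc : conj (ca X) = ca X := by apply Complex.ext <;> simp [ca_re, ca_im, hx]
  simp only [ca_mul, cb_mul, ca_star, cb_star, ca_ofc, cb_ofc]; simp [hc]
  linear_combination ca X * e
theorem cb_t (a : ℂ) {X : HH} :
    cb (star (ofc 0 a) * X * ofc 0 a) = a ^ 2 * conj (cb X) := by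
  simp only [ca_mul, cb_mul, ca_star, cb_star, ca_ofc, cb_ofc]; simp
  ring

theorem D0_fwd {S1 T1 S2 T2 u1 u2 : HH} {r1 r2 : ℂ} (x1 : AxData S1 T1 r1) (x2 : AxData S2 T2 r2)
    (h1 : IsG u1) (h2 : IsG u2) (l : ℂ) (hl : l = r1 * conj r2 / 2)
    (h : l = 0 ∨ kap u1 u2 ^ 2 = 1 ∨ kap u1 u2 ^ 2 * l = ‖l‖) :
    ∃ w, Quaternion.normSq w = 1 ∧ star w * S1 * w = star u1 * S1 * u1 ∧
      star w * T1 * w = star u1 * T1 * u1 ∧ star w * S2 * w = star u2 * S2 * u2 ∧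
      star w * T2 * w = star u2 * T2 * u2 := by
  have A : r1 = 0 ∨ r2 = 0 ∨ kap u1 u2 ^ 2 = 1 ∨
      (r1 ≠ 0 ∧ r2 ≠ 0 ∧ kap u1 u2 ^ 2 * l = ‖l‖) := by
    rcases h with h | h | h
    · rw [hl] at h; simp at h; tauto
    · tauto
    · tauto
  rcases A with h | h | h | ⟨n1, n2, h⟩
  · obtain ⟨z1, z2⟩ := x1.z h
    refine ⟨u2, h2.2.2, ?_, ?_, rfl, rfl⟩ <;> apply cab_ext <;>
      simp [ca_cnj _ h1, ca_cnj _ h2, cb_cnj _ h1, cb_cnj _ h2, z1, z2]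
  · obtain ⟨z1, z2⟩ := x2.z h
    refine ⟨u1, h1.2.2, rfl, rfl, ?_, ?_⟩ <;> apply cab_ext <;>
      simp [ca_cnj _ h1, ca_cnj _ h2, cb_cnj _ h1, cb_cnj _ h2, z1, z2]
  · have e := kap_sq_one h2 h
    have e' : conj (ca u1) ^ 2 = conj (ca u2) ^ 2 := by rw [← map_pow, e, map_pow]
    refine ⟨u1, h1.2.2, rfl, rfl, ?_, ?_⟩ <;> apply cab_ext <;>
      simp [ca_cnj _ h1, ca_cnj _ h2, cb_cnj _ h1, cb_cnj _ h2, e']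
  · obtain ⟨s, hs, hs2⟩ := exists_sigma r1
    have e0 := unit_conj hs
    have n1' : (‖r1‖ : ℂ) ≠ 0 := by simpa using n1
    have n2' : (‖r2‖ : ℂ) ≠ 0 := by simpa using n2
    have e1 : s ^ 2 * r1 = ‖r1‖ := by
      nth_rewrite 1 [hs2]; linear_combination ‖r1‖ * (s * conj s + 1) * e0
    have c2 : r2 * conj r2 = ‖r2‖ ^ 2 := by
      rw [Complex.mul_conj, Complex.normSq_eq_norm_sq]; simp
    have nl : (‖l‖ : ℂ) = ‖r1‖ * ‖r2‖ / 2 := by rw [hl]; simp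
    have e2 : s ^ 2 * r2 = kap u1 u2 ^ 2 * ‖r2‖ := by
      have : (‖r1‖ : ℂ) * ‖r2‖ * (s ^ 2 * r2) = ‖r1‖ * ‖r2‖ * (kap u1 u2 ^ 2 * ‖r2‖) := by
        rw [nl, hl] at h
        linear_combination (-2) * s ^ 2 * r2 * h + kap u1 u2 ^ 2 * s ^ 2 * r1 * c2
           + kap u1 u2 ^ 2 * ‖r2‖ ^ 2 * e1
      exact mul_left_cancel₀ (mul_ne_zero n1' n2') this
    have f1 : ∀ v : ℂ, r1 * v = ‖r1‖ * conj v → s ^ 2 * conj v = v := by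
      intro v hv
      apply mul_left_cancel₀ n1'
      linear_combination - s ^ 2 * hv + v * e1
    have f2 : ∀ v : ℂ, r2 * v = ‖r2‖ * conj v → s ^ 2 * conj v = kap u1 u2 ^ 2 * v := by
      intro v hv
      apply mul_left_cancel₀ n2'
      linear_combination - s ^ 2 * hv + v * e2
    have c1 := unit_conj h1.ca
    have g : conj (ca u1) ^ 2 * kap u1 u2 ^ 2 = conj (ca u2) ^ 2 := by
      rw [kap]; linear_combination conj (ca u2) ^ 2 * (ca u1 * conj (ca u1) + 1) * c1
    have as : ∀ X : HH, star (ofc 0 s * u1) * X * (ofc 0 s * u1) =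
        star u1 * (star (ofc 0 s) * X * ofc 0 s) * u1 := by
      intro X; rw [star_mul]; noncomm_ring
    refine ⟨ofc 0 s * u1, nsq_mul (ofc_unit (by simp [hs])) h1.2.2, ?_, ?_, ?_, ?_⟩ <;> rw [as] <;>
      apply cab_ext <;> simp only [ca_cnj _ h1, ca_cnj _ h2, cb_cnj _ h1, cb_cnj _ h2, cb_t]
    · exact ca_t s hs x1.sk
    · rw [f1 _ x1.rs]
    · exact ca_t s hs x1.tk
    · rw [f1 _ x1.rt]
    · exact ca_t s hs x2.sk
    · rw [f2 _ x2.rs]; linear_combination cb S2 * g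
    · exact ca_t s hs x2.tk
    · rw [f2 _ x2.rt]; linear_combination cb T2 * g

theorem k_core {k q : ℂ} (hk : ‖k‖ = 1) (_hq : q ≠ 0) (h : (q * conj k).re = q.re) :
    k = 1 ∨ k * conj q = q := by
  have e := unit_conj hk
  have s1 : q * conj k + conj q * k = q + conj q := by
    have := congrArg (fun x : ℝ => (2 * x : ℂ)) h
    apply Complex.ext
    · have : (conj q * k).re = (q * conj k).re := by simp
      simp only [Complex.add_re, this, h, Complex.conj_re]
    · simp; ring
  have : (k - 1) * (k * conj q - q) = 0 := by
    linear_combination k * s1 - q * e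
  rcases mul_eq_zero.1 this with h | h
  · left; linear_combination h
  · right; linear_combination h

theorem re_mul_cab (X Y : HH) : (X * Y).re = (ca X * ca Y - cb X * conj (cb Y)).re := by
  rw [← ca_mul]; rfl

theorem D0_bwd_aux {X1 X2 u1 u2 w : HH} {r1 r2 : ℂ} (h1 : IsG u1) (h2 : IsG u2)
    (hw : Quaternion.normSq w = 1) (v1 : cb X1 ≠ 0) (v2 : cb X2 ≠ 0)
    (e1 : r1 * cb X1 = ‖r1‖ * conj (cb X1)) (e2 : r2 * cb X2 = ‖r2‖ * conj (cb X2))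
    (w1 : star w * X1 * w = star u1 * X1 * u1) (w2 : star w * X2 * w = star u2 * X2 * u2) :
    kap u1 u2 ^ 2 = 1 ∨ kap u1 u2 ^ 2 * (r1 * conj r2 / 2) = ‖r1 * conj r2 / 2‖ := by
  have E : (X1 * X2).re = ((star u1 * X1 * u1) * (star u2 * X2 * u2)).re := by
    rw [← w1, ← w2, cnj_mul hw, re_comm (star w * (X1 * X2)) w, ← mul_assoc, mul_star_unit hw, one_mul]
  rw [re_mul_cab, re_mul_cab, ca_cnj _ h1, ca_cnj _ h2, cb_cnj _ h1, cb_cnj _ h2] at E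
  have E' : ((cb X1 * conj (cb X2)) * conj (kap u1 u2 ^ 2)).re = (cb X1 * conj (cb X2)).re := by
    have : conj (ca u1) ^ 2 * cb X1 * conj (conj (ca u2) ^ 2 * cb X2) =
      (cb X1 * conj (cb X2)) * conj (kap u1 u2 ^ 2) := by simp [kap]; ring
    rw [this] at E
    simp only [Complex.sub_re] at E; linarith
  have nq : cb X1 * conj (cb X2) ≠ 0 := mul_ne_zero v1 (by simpa using v2)
  rcases k_core (by rw [norm_pow, kap_unit h1 h2, one_pow]) nq E' with h | h
  · left; exact h
  · right
    apply mul_right_cancel₀ nq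
    have e2' := congrArg conj e2
    simp only [map_mul, Complex.conj_conj, Complex.conj_ofReal] at h e2'
    have nl : (‖r1 * conj r2 / 2‖ : ℂ) = ‖r1‖ * ‖r2‖ / 2 := by simp
    rw [nl]
    linear_combination kap u1 u2 ^ 2 / 2 * conj r2 * conj (cb X2) * e1 +
      kap u1 u2 ^ 2 / 2 * ‖r1‖ * conj (cb X1) * e2' + ‖r1‖ * ‖r2‖ / 2 * h

theorem D0_bwd {S1 T1 S2 T2 u1 u2 w : HH} {r1 r2 : ℂ} (x1 : AxData S1 T1 r1) (x2 : AxData S2 T2 r2)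
    (h1 : IsG u1) (h2 : IsG u2) (hw : Quaternion.normSq w = 1)
    (a1 : star w * S1 * w = star u1 * S1 * u1)
    (a2 : star w * T1 * w = star u1 * T1 * u1) (a3 : star w * S2 * w = star u2 * S2 * u2)
    (a4 : star w * T2 * w = star u2 * T2 * u2) :
    r1 * conj r2 / 2 = 0 ∨ kap u1 u2 ^ 2 = 1 ∨
     kap u1 u2 ^ 2 * (r1 * conj r2 / 2) = ‖r1 * conj r2 / 2‖ := by
  by_cases n1 : r1 = 0
  · left; simp [n1]
  by_cases n2 : r2 = 0
  · left; simp [n2]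
  right
  rcases x1.nz n1 with v1 | v1 <;> rcases x2.nz n2 with v2 | v2
  · exact D0_bwd_aux h1 h2 hw v1 v2 x1.rs x2.rs a1 a3
  · exact D0_bwd_aux h1 h2 hw v1 v2 x1.rs x2.rt a1 a4
  · exact D0_bwd_aux h1 h2 hw v1 v2 x1.rt x2.rs a2 a3
  · exact D0_bwd_aux h1 h2 hw v1 v2 x1.rt x2.rt a2 a4

end PG

section PH

structure WOK (y1 y2 : HH) (D : ℝ) : Prop where
  n1 : Quaternion.normSq y1 = 1
  n2 : Quaternion.normSq y2 = 1
  d0 : 0 ≤ D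
  d1 : D ≤ 1

def ConjW (y1 y2 : HH) (D : ℝ) (y1' y2' : HH) (D' : ℝ) : Prop :=
  ∃ w, Quaternion.normSq w = 1 ∧ hR y1 D = star w * hR y1' D' * w ∧
    hS y1 D = star w * hS y1' D' * w ∧ hR y2 D = star w * hR y2' D' * w ∧
    hS y2 D = star w * hS y2' D' * w

def gg (y1 y2 : HH) (D : ℝ) : Fin 4 → ℂ := zz y1 y2 (mm y1 y2 D)

theorem mm_le {y1 y2 : HH} {D : ℝ} (h : WOK y1 y2 D) : ‖mm y1 y2 D‖ ≤ 1 := by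
  rcases h.d1.lt_or_eq with h1 | h1
  · exact (mf_lt h.d0 h1 (lam_lt h.n1 h.n2)).le
  · rw [mm, h1, mf_one]; simp

theorem R_of_T {R S : HH} (h : Quaternion.normSq S = 1) : R = (R * S) * star S := by
  rw [mul_assoc, mul_star_unit h, mul_one]

theorem cnj_R {R S w u : HH} (hS : Quaternion.normSq S = 1) (hw : Quaternion.normSq w = 1)
    (hu : Quaternion.normSq u = 1) (h1 : star w * S * w = star u * S * u)
    (h2 : star w * (R * S) * w = star u * (R * S) * u) : star w * R * w = star u * R * u := by
  rw [← cnj_mul hw, ← cnj_mul hu, h1] at h2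
  have n : Quaternion.normSq (star u * S * u) = 1 := nsq_mul (nsq_mul (nsq_star hu) hS) hu
  rw [R_of_T (R := star w * R * w) n, h2, ← R_of_T n]

theorem u_eq {u1 u2 : HH} (h1 : IsG u1) (h2 : IsG u2) (h : kap u1 u2 ^ 2 = 1) (X : HH) :
    star u1 * X * u1 = star u2 * X * u2 := by
  have e := kap_sq_one h2 h
  have e' : conj (ca u1) ^ 2 = conj (ca u2) ^ 2 := by rw [← map_pow, e, map_pow]
  apply cab_ext <;> simp [ca_cnj _ h1, ca_cnj _ h2, cb_cnj _ h1, cb_cnj _ h2, e']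

theorem cnj_one {w y y' : HH} (X : HH) (e : y = y' * w) :
    star y * X * y = star w * (star y' * X * y') * w := by
  rw [e, star_mul]; noncomm_ring

theorem conj_of_proj {y1 y2 y1' y2' : HH} {D D' : ℝ} {κ : ℂ} (h : WOK y1 y2 D)
    (h' : WOK y1' y2' D') (hκ : κ ≠ 0) (e : gg y1 y2 D = κ • gg y1' y2' D') :
    ConjW y1 y2 D y1' y2' D' := by
  have main : ∀ hD : D < 1, ConjW y1 y2 D y1' y2' D' := by
    intro hD
    obtain ⟨u1, u2, g1, g2, e1, e2, e3⟩ := proj_lt h.n1 h.n2 h'.n1 h'.n2 hκ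
      (mf_lt h.d0 hD (lam_lt h.n1 h.n2)) (mm_le h') e
    have e4 : mf D ((kap u1 u2 ^ 2) ^ 2 * lam y1' y2') = kap u1 u2 ^ 2 * mf D' (lam y1' y2') := by
      rw [← lam_g _ _ g1 g2, ← e1, ← e2]; exact e3
    obtain ⟨f1, f2, f3⟩ := mf_eq (by rw [norm_pow, kap_unit g1 g2, one_pow]) h.d0 h.d1 h'.d0 h'.d1
      (lam_lt h'.n1 h'.n2) e4
    subst f1
    rcases h.d0.lt_or_eq with d | d
    · have hk := f2 d
      refine ⟨u1, g1.2.2, ?_, ?_, ?_, ?_⟩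
      · rw [e1, hR_g _ _ g1]
      · rw [e1, hS_g _ _ g1]
      · rw [e2, hR_g _ _ g2, u_eq g1 g2 hk]
      · rw [e2, hS_g _ _ g2, u_eq g1 g2 hk]
    · subst d
      obtain ⟨w, hw, a1, a2, a3, a4⟩ := D0_fwd (axdata h'.n1) (axdata h'.n2) g1 g2 (lam y1' y2') rfl
        (f3 rfl)
      refine ⟨w, hw, ?_, ?_, ?_, ?_⟩
      · rw [e1, hR_g _ _ g1]
        exact (cnj_R (hS_unit h'.n1 le_rfl zero_le_one) hw g1.2.2 a1 a2).symm
      · rw [e1, hS_g _ _ g1, a1]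
      · rw [e2, hR_g _ _ g2]
        exact (cnj_R (hS_unit h'.n2 le_rfl zero_le_one) hw g2.2.2 a3 a4).symm
      · rw [e2, hS_g _ _ g2, a3]
  rcases h.d1.lt_or_eq with d | d
  · exact main d
  rcases h'.d1.lt_or_eq with d' | d'
  · exfalso
    have e' : gg y1' y2' D' = κ⁻¹ • gg y1 y2 D := by
      rw [e, smul_smul, inv_mul_cancel₀ hκ, one_smul]
    have lt := mf_lt h'.d0 d' (lam_lt h'.n1 h'.n2)
    obtain ⟨u1, u2, g1, g2, e1, e2, e3⟩ := proj_lt h'.n1 h'.n2 h.n1 h.n2 (inv_ne_zero hκ)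
      lt (mm_le h) e'
    have : mm y1 y2 D = 1 := by rw [mm, d, mf_one]
    rw [this, mul_one] at e3
    have k := kap_unit g1 g2
    have := congrArg norm e3
    rw [norm_pow, k, one_pow] at this
    change ‖mf D' (lam y1' y2')‖ = 1 at this
    linarith
  · subst d d'
    rw [gg, gg, mm, mm, mf_one, mf_one] at e
    have p := proj_one h.n1 h.n2 h'.n1 h'.n2 e
    have w1 : y1 = y1' * (star y1' * y1) := by rw [← mul_assoc, mul_star_unit h'.n1, one_mul]
    have w2 : y2 = y2' * (star y1' * y1) ∨ -y2 = y2' * (star y1' * y1) := by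
      rcases p with p | p
      · left
        have : star y1' * y1 = star y2' * y2 := by
          calc star y1' * y1 = star y1' * (y1 * star y2) * y2 := by
                rw [mul_assoc, mul_assoc y1, star_mul_unit h.n2, mul_one]
            _ = (star y1' * y1') * star y2' * y2 := by rw [p]; noncomm_ring
            _ = _ := by rw [star_mul_unit h'.n1, one_mul]
        rw [this, ← mul_assoc, mul_star_unit h'.n2, one_mul]
      · right
        have : star y1' * y1 = -(star y2' * y2) := by
          calc star y1' * y1 = star y1' * (y1 * star y2) * y2 := by
                rw [mul_assoc, mul_assoc y1, star_mul_unit h.n2, mul_one]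
            _ = -((star y1' * y1') * star y2' * y2) := by rw [p]; noncomm_ring
            _ = _ := by rw [star_mul_unit h'.n1, one_mul]
        rw [this, mul_neg, ← mul_assoc, mul_star_unit h'.n2, one_mul]
    have w2' : ∀ X : HH, star y2 * X * y2 = star (star y1' * y1) * (star y2' * X * y2') *
        (star y1' * y1) := by
      intro X
      rcases w2 with w2 | w2
      · exact cnj_one X w2
      · rw [← cnj_one X w2]; simp
    refine ⟨star y1' * y1, nsq_mul (nsq_star h'.n1) h.n1, ?_, ?_, ?_, ?_⟩
    · rw [hR_one h.n1, hR_one h'.n1]; exact cnj_one _ w1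
    · rw [hS_one h.n1, hS_one h'.n1]; exact cnj_one _ w1
    · rw [hR_one h.n2, hR_one h'.n2]; exact w2' _
    · rw [hS_one h.n2, hS_one h'.n2]; exact w2' _

theorem re_cnj (X : HH) {w : HH} (hw : Quaternion.normSq w = 1) : (star w * X * w).re = X.re := by
  rw [re_comm (star w * X) w, ← mul_assoc, mul_star_unit hw, one_mul]

theorem comm_of_cnj {w u X : HH} (hw : Quaternion.normSq w = 1) (hu : Quaternion.normSq u = 1)
    (h : star w * X * w = star u * X * u) : (w * star u) * X = X * (w * star u) := by
  have e : w * (star w * X * w) * star u = w * (star u * X * u) * star u := by rw [h]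
  have l : w * (star w * X * w) * star u = (w * star w) * X * (w * star u) := by noncomm_ring
  have r : w * (star u * X * u) * star u = (w * star u) * X * (u * star u) := by noncomm_ring
  rw [l, r, mul_star_unit hw, mul_star_unit hu, one_mul, mul_one] at e
  exact e.symm

theorem cnj_central {w u R S : HH} (hw : Quaternion.normSq w = 1) (hu : Quaternion.normSq u = 1)
    (hRS : R * S ≠ S * R) (h1 : star w * R * w = star u * R * u)
    (h2 : star w * S * w = star u * S * u) : w = u ∨ w = -u := by
  have e : w = w * star u * u := by rw [mul_assoc, star_mul_unit hu, mul_one]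
  rcases central (nsq_mul hw (nsq_star hu)) (comm_of_cnj hw hu h1) (comm_of_cnj hw hu h2) hRS with t | t
  · left; rw [e, t, one_mul]
  · right; rw [e, t]; simp

theorem D_of_conj {y y' w : HH} {D D' : ℝ} (n : Quaternion.normSq y = 1)
    (n' : Quaternion.normSq y' = 1) (d0 : 0 ≤ D) (d1 : D ≤ 1) (d0' : 0 ≤ D') (d1' : D' ≤ 1)
    (hw : Quaternion.normSq w = 1)
    (a : hR y D = star w * hR y' D' * w) (b : hS y D = star w * hS y' D' * w) : D = D' := by
  have e1 := h_comm n d0 d1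
  have e2 := h_comm n' d0' d1'
  have sw : ∀ X : HH, star (star w * X * w) = star w * star X * w := by
    intro X; rw [star_mul, star_mul, star_star, mul_assoc]
  rw [a, b, sw, sw, cnj_mul hw, cnj_mul hw, cnj_mul hw, e2] at e1
  have e3 := congrArg (fun q : HH => q.re) e1
  simp only [re_cnj _ hw] at e3
  have : ∀ E : ℝ, 0 ≤ E → E ≤ 1 → (-(g0 E * g0 E)).re = 1 - 2 * E ^ 2 := by
    intro E h0 h1
    have f1 := nsq_expand (g0_unit h0 h1)
    simp [g0] at f1 ⊢
    linear_combination f1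
  rw [this _ d0 d1, this _ d0' d1'] at e3
  nlinarith

theorem proj_of_conj {y1 y2 y1' y2' : HH} {D D' : ℝ} (h : WOK y1 y2 D)
    (h' : WOK y1' y2' D') (e : ConjW y1 y2 D y1' y2' D') :
    ∃ κ : ℂ, κ ≠ 0 ∧ gg y1 y2 D = κ • gg y1' y2' D' := by
  obtain ⟨w, hw, a1, a2, a3, a4⟩ := e
  have := D_of_conj h.n1 h'.n1 h.d0 h.d1 h'.d0 h'.d1 hw a1 a2
  subst this
  rcases h.d1.lt_or_eq with d | d
  · obtain ⟨u1, g1, e1⟩ := lemT h.n1 h'.n1 h.d0 d (by rw [a1, re_cnj _ hw]) (by rw [a2, re_cnj _ hw])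
      (by rw [a1, a2, cnj_mul hw, re_cnj _ hw])
    obtain ⟨u2, g2, e2⟩ := lemT h.n2 h'.n2 h.d0 d (by rw [a3, re_cnj _ hw]) (by rw [a4, re_cnj _ hw])
      (by rw [a3, a4, cnj_mul hw, re_cnj _ hw])
    have kn : ‖kap u1 u2 ^ 2‖ = 1 := by rw [norm_pow, kap_unit g1 g2, one_pow]
    suffices hs : mf D ((kap u1 u2 ^ 2) ^ 2 * lam y1' y2') = kap u1 u2 ^ 2 * mf D (lam y1' y2') by
      refine ⟨kap u1 u2, ?_, ?_⟩
      · intro h0; rw [h0] at kn; simp at kn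
      · rw [gg, mm, e1, e2, lam_g _ _ g1 g2, hs, zz_g _ _ g1 g2]; rfl
    rw [e1, hR_g _ _ g1] at a1
    rw [e1, hS_g _ _ g1] at a2
    rw [e2, hR_g _ _ g2] at a3
    rw [e2, hS_g _ _ g2] at a4
    rcases h.d0.lt_or_eq with d0 | d0
    · have c1 := cnj_central hw g1.2.2 (h_noncomm h'.n1 d0 h.d1) a1.symm a2.symm
      have c2 := cnj_central hw g2.2.2 (h_noncomm h'.n2 d0 h.d1) a3.symm a4.symm
      have c3 : ca u1 = ca u2 ∨ ca u1 = - ca u2 := by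
        have neg : ∀ q : HH, ca (-q) = - ca q := by
          intro q; apply Complex.ext <;> simp [ca_re, ca_im]
        rcases c1 with c1 | c1 <;> rcases c2 with c2 | c2 <;> rw [c1] at c2
        · left; rw [c2]
        · right; rw [c2, neg]
        · right; rw [← c2, neg, neg_neg]
        · left; rw [neg_inj.1 c2]
      have k : kap u1 u2 ^ 2 = 1 := by
        have q := unit_conj g2.ca
        have : ca u1 ^ 2 = ca u2 ^ 2 := by rcases c3 with c | c <;> rw [c]; ring
        rw [kap]
        linear_combination conj (ca u2) ^ 2 * this + (ca u2 * conj (ca u2) + 1) * q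
      rw [k]; simp
    · subst d0
      apply mf_conv kn
      exact D0_bwd (axdata h'.n1) (axdata h'.n2) g1 g2 hw a2.symm
        (by rw [← cnj_mul hw, ← a1, ← a2, cnj_mul g1.2.2]) a4.symm
        (by rw [← cnj_mul hw, ← a3, ← a4, cnj_mul g2.2.2])
  · subst d
    rw [gg, gg, mm, mm, mf_one, mf_one]
    apply proj_one_conv
    have nc := h_noncomm (y := 1) (D := 1) (by simp) one_pos le_rfl
    rw [hR_one h.n1, hR_one h'.n1, ← cnj_one _ rfl] at a1
    rw [hS_one h.n1, hS_one h'.n1, ← cnj_one _ rfl] at a2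
    rw [hR_one h.n2, hR_one h'.n2, ← cnj_one _ rfl] at a3
    rw [hS_one h.n2, hS_one h'.n2, ← cnj_one _ rfl] at a4
    have c1 := cnj_central h.n1 (nsq_mul h'.n1 hw) nc a1 a2
    have c2 := cnj_central h.n2 (nsq_mul h'.n2 hw) nc a3 a4
    have f : y1' * w * star (y2' * w) = y1' * star y2' := by
      rw [star_mul, mul_assoc, ← mul_assoc w, mul_star_unit hw, one_mul]
    rcases c1 with c1 | c1 <;> rcases c2 with c2 | c2 <;> rw [c1, c2]
    · left; exact f
    · right; rw [star_neg, mul_neg, f]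
    · right; rw [neg_mul, f]
    · left; rw [star_neg, neg_mul_neg, f]

end PH

section PI

theorem isG_one : IsG (1 : HH) := by
  refine ⟨?_, ?_, by simp⟩ <;> rw [one_mkq] <;> rfl

theorem ca_one : ca (1 : HH) = 1 := rfl

theorem gg_of_zz {y1 y2 : HH} (h1 : Quaternion.normSq y1 = 1) (h2 : Quaternion.normSq y2 = 1)
    {m : ℂ} (hm : ‖m‖ ≤ 1) : ∃ (y2' : HH) (D : ℝ) (t : ℂ), WOK y1 y2' D ∧ t ≠ 0 ∧
      zz y1 y2 m = t • gg y1 y2' D := by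
  obtain ⟨D, k, d0, d1, hk, e⟩ := mf_surj (lam_lt h1 h2) hm
  obtain ⟨t, ht, rfl⟩ := sqrt_unit hk
  have g2 : IsG (ofc (conj t) 0) := isG_ofc (by simpa using ht)
  have t0 : t ≠ 0 := by intro h; rw [h] at ht; simp at ht
  have kt : kap 1 (ofc (conj t) 0) = t := by rw [kap, ca_one, ca_ofc]; simp
  refine ⟨y2 * ofc (conj t) 0, D, t⁻¹, ⟨h1, nsq_mul h2 g2.2.2, d0, d1⟩, inv_ne_zero t0, ?_⟩
  have a := lam_g y1 y2 isG_one g2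
  have b := zz_g y1 y2 isG_one g2 m
  rw [mul_one, kt] at a b
  rw [gg, mm, a, e, b, smul_smul, inv_mul_cancel₀ t0, one_smul]

theorem svd_aux {z0 z1 z2 z3 a b : ℂ} (hz : z0 ≠ 0 ∨ z1 ≠ 0 ∨ z2 ≠ 0 ∨ z3 ≠ 0)
    (hab : a * conj a + b * conj b = 1)
    (ho : conj (z0 * a - z1 * conj b) * (z0 * b + z1 * conj a) +
      conj (z2 * a - z3 * conj b) * (z2 * b + z3 * conj a) = 0)
    (hn : ‖z0 * b + z1 * conj a‖ ^ 2 + ‖z2 * b + z3 * conj a‖ ^ 2 ≤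
      ‖z0 * a - z1 * conj b‖ ^ 2 + ‖z2 * a - z3 * conj b‖ ^ 2) :
    ∃ (y1 y2 : HH) (m n : ℂ), Quaternion.normSq y1 = 1 ∧ Quaternion.normSq y2 = 1 ∧ ‖m‖ ≤ 1 ∧
      n ≠ 0 ∧ ![z0, z1, z2, z3] = n • zz y1 y2 m := by
  have i0 : z0 = (z0 * a - z1 * conj b) * conj a + (z0 * b + z1 * conj a) * conj b := by
    linear_combination -z0 * hab
  have i1 : z1 = -(z0 * a - z1 * conj b) * b + (z0 * b + z1 * conj a) * a := by
    linear_combination -z1 * hab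
  have i2 : z2 = (z2 * a - z3 * conj b) * conj a + (z2 * b + z3 * conj a) * conj b := by
    linear_combination -z2 * hab
  have i3 : z3 = -(z2 * a - z3 * conj b) * b + (z2 * b + z3 * conj a) * a := by
    linear_combination -z3 * hab
  generalize z0 * a - z1 * conj b = p0 at *
  generalize z2 * a - z3 * conj b = p1 at *
  generalize z0 * b + z1 * conj a = q0 at *
  generalize z2 * b + z3 * conj a = q1 at *
  set N : ℝ := ‖p0‖ ^ 2 + ‖p1‖ ^ 2 with hN
  have Npos : 0 < N := by
    rcases (by positivity : 0 ≤ N).lt_or_eq with h | h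
    · exact h
    · exfalso
      have a0 : ‖p0‖ = 0 := by nlinarith [sq_nonneg ‖p0‖, sq_nonneg ‖p1‖]
      have a1 : ‖p1‖ = 0 := by nlinarith [sq_nonneg ‖p0‖, sq_nonneg ‖p1‖]
      have a2 : ‖q0‖ = 0 := by nlinarith [sq_nonneg ‖q0‖, sq_nonneg ‖q1‖]
      have a3 : ‖q1‖ = 0 := by nlinarith [sq_nonneg ‖q0‖, sq_nonneg ‖q1‖]
      rw [norm_eq_zero] at a0 a1 a2 a3
      subst a0 a1 a2 a3
      simp at i0 i1 i2 i3
      tauto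
  have cN : p0 * conj p0 + p1 * conj p1 = N := by
    rw [Complex.mul_conj, Complex.mul_conj, Complex.normSq_eq_norm_sq, Complex.normSq_eq_norm_sq, hN]
    push_cast; ring
  have NC : (N : ℂ) ≠ 0 := by exact_mod_cast Npos.ne'
  have sq : (√N) ^ 2 = N := Real.sq_sqrt Npos.le
  have sp : 0 < √N := Real.sqrt_pos.2 Npos
  set n := √N with hn'
  have nC : (n : ℂ) ≠ 0 := by exact_mod_cast sp.ne'
  have m0 : (p0 * q1 - p1 * q0) / N * conj p0 = q1 := by
    field_simp; linear_combination -p1 * ho + q1 * cN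
  have m1 : (p0 * q1 - p1 * q0) / N * conj p1 = -q0 := by
    field_simp; linear_combination p0 * ho - q0 * cN
  set m := (p0 * q1 - p1 * q0) / N with hm
  have mle : ‖m‖ ≤ 1 := by
    have e0 := congrArg norm m0
    have e1 := congrArg norm m1
    simp only [norm_mul, RCLike.norm_conj, norm_neg] at e0 e1
    rw [← e0, ← e1] at hn
    have : ‖m‖ ^ 2 * N ≤ 1 * N := by rw [hN]; nlinarith
    have := le_of_mul_le_mul_right this Npos
    nlinarith [norm_nonneg m]
  refine ⟨ofc (p0 / n) (-conj p1 / n), ofc a b, m, n, ofc_unit ?_, ofc_unit ?_, mle, nC, ?_⟩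
  · rw [norm_div, norm_div, norm_neg, RCLike.norm_conj, Complex.norm_real,
      Real.norm_of_nonneg sp.le, div_pow, div_pow, sq, ← add_div, ← hN, div_self Npos.ne']
  · have : ((‖a‖ ^ 2 + ‖b‖ ^ 2 : ℝ) : ℂ) = 1 := by
      rw [← hab, Complex.mul_conj, Complex.mul_conj, Complex.normSq_eq_norm_sq,
        Complex.normSq_eq_norm_sq]; push_cast; ring
    exact_mod_cast this
  · ext i; fin_cases i <;> simp [zz, ca_ofc, cb_ofc] <;> field_simp
    · linear_combination i0 + conj b * m1
    · linear_combination i1 + a * m1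
    · linear_combination i2 - conj b * m0
    · linear_combination i3 - a * m0

theorem eig_exists (p q r : ℂ) : ∃ (μ x y : ℂ), (x ≠ 0 ∨ y ≠ 0) ∧ p * x + q * y = μ * x ∧
    conj q * x + r * y = μ * y := by
  obtain ⟨μ, hμ⟩ := Module.End.exists_eigenvalue (Matrix.toLin' !![p, q; conj q, r])
  obtain ⟨v, hv⟩ := hμ.exists_hasEigenvector
  have e := hv.apply_eq_smul
  refine ⟨μ, v 0, v 1, ?_, ?_, ?_⟩
  · by_contra h
    push Not at h
    apply hv.2; ext i; fin_cases i
    · exact h.1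
    · exact h.2
  · have := congrFun e 0
    simpa [Matrix.toLin'_apply, Matrix.mulVec, dotProduct, Fin.sum_univ_two] using this
  · have := congrFun e 1
    simpa [Matrix.toLin'_apply, Matrix.mulVec, dotProduct, Fin.sum_univ_two] using this

theorem svd {z : Fin 4 → ℂ} (hz : z ≠ 0) :
    ∃ (y1 y2 : HH) (m n : ℂ), Quaternion.normSq y1 = 1 ∧ Quaternion.normSq y2 = 1 ∧ ‖m‖ ≤ 1 ∧
      n ≠ 0 ∧ z = n • zz y1 y2 m := by
  have ez : z = ![z 0, z 1, z 2, z 3] := by ext i; fin_cases i <;> rfl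
  have hz' : z 0 ≠ 0 ∨ z 1 ≠ 0 ∨ z 2 ≠ 0 ∨ z 3 ≠ 0 := by
    by_contra h
    push Not at h
    apply hz; rw [ez, h.1, h.2.1, h.2.2.1, h.2.2.2]; ext i; fin_cases i <;> rfl
  rw [ez]
  generalize z 0 = z0 at *
  generalize z 1 = z1 at *
  generalize z 2 = z2 at *
  generalize z 3 = z3 at *
  obtain ⟨μ, x, y, hxy, e1, e2⟩ := eig_exists (conj z0 * z0 + conj z2 * z2)
    (conj z0 * z1 + conj z2 * z3) (conj z1 * z1 + conj z3 * z3)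
  simp only [map_add, map_mul, Complex.conj_conj] at e2
  set N : ℝ := ‖x‖ ^ 2 + ‖y‖ ^ 2 with hN
  have Npos : 0 < N := by
    rcases hxy with h | h
    · have := norm_pos_iff.2 h; positivity
    · have := norm_pos_iff.2 h; positivity
  have cN : x * conj x + y * conj y = N := by
    rw [Complex.mul_conj, Complex.mul_conj, Complex.normSq_eq_norm_sq, Complex.normSq_eq_norm_sq, hN]
    push_cast; ring
  have sq : (√N) ^ 2 = N := Real.sq_sqrt Npos.le
  have sp : 0 < √N := Real.sqrt_pos.2 Npos
  set n := √N with hn'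
  have nC : (n : ℂ) ≠ 0 := by exact_mod_cast sp.ne'
  have sqC : (n : ℂ) ^ 2 = N := by exact_mod_cast sq
  set a : ℂ := x / n with ha
  set b : ℂ := -conj y / n with hb
  have hx : x = n * a := by rw [ha]; field_simp
  have hy : y = -(n * conj b) := by rw [hb]; simp; field_simp
  have hab : a * conj a + b * conj b = 1 := by
    rw [ha, hb]; simp; field_simp; rw [sqC, ← cN]; ring
  rw [hx, hy] at e1 e2
  have e1' : (conj z0 * z0 + conj z2 * z2) * a - (conj z0 * z1 + conj z2 * z3) * conj b = μ * a := by
    apply mul_left_cancel₀ nC; linear_combination e1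
  have e2' : (conj z1 * z0 + conj z3 * z2) * a - (conj z1 * z1 + conj z3 * z3) * conj b
     = -μ * conj b := by
    apply mul_left_cancel₀ nC; linear_combination e2
  have ho' : (z0 * a - z1 * conj b) * conj (z0 * b + z1 * conj a) +
      (z2 * a - z3 * conj b) * conj (z2 * b + z3 * conj a) = 0 := by
    simp only [map_add, map_mul, Complex.conj_conj]
    linear_combination conj b * e1' + a * e2'
  have ho : conj (z0 * a - z1 * conj b) * (z0 * b + z1 * conj a) +
      conj (z2 * a - z3 * conj b) * (z2 * b + z3 * conj a) = 0 := by
    have := congrArg conj ho'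
    simpa only [map_add, map_mul, Complex.conj_conj, map_zero] using this
  rcases le_total (‖z0 * b + z1 * conj a‖ ^ 2 + ‖z2 * b + z3 * conj a‖ ^ 2)
      (‖z0 * a - z1 * conj b‖ ^ 2 + ‖z2 * a - z3 * conj b‖ ^ 2) with h | h
  · exact svd_aux hz' hab ho h
  · have f : ∀ u v : ℂ, u * b - v * conj (-a) = u * b + v * conj a := by intros; simp
    have f' : ∀ u v : ℂ, u * -a + v * conj b = -(u * a - v * conj b) := by intros; ring
    refine svd_aux (a := b) (b := -a) hz' ?_ ?_ ?_
    · simp; linear_combination hab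
    · rw [f, f, f', f']; linear_combination -ho'
    · rw [f, f, f', f', norm_neg, norm_neg]; exact h

theorem gg_surj {z : Fin 4 → ℂ} (hz : z ≠ 0) :
    ∃ (y1 y2 : HH) (D : ℝ) (t : ℂ), WOK y1 y2 D ∧ t ≠ 0 ∧ z = t • gg y1 y2 D := by
  obtain ⟨y1, y2, m, n, h1, h2, hm, hn, rfl⟩ := svd hz
  obtain ⟨y2', D, t, hw, ht, e⟩ := gg_of_zz h1 h2 hm
  exact ⟨y1, y2', D, n * t, hw, mul_ne_zero hn ht, by rw [e, smul_smul]⟩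

end PI

section PJ

theorem z_re : (0 : HH).re = 0 := rfl
theorem z_imI : (0 : HH).imI = 0 := rfl
theorem z_imJ : (0 : HH).imJ = 0 := rfl
theorem z_imK : (0 : HH).imK = 0 := rfl

theorem q_normalize {q : HH} (hq : q ≠ 0) :
    ∃ c : ℝ, 0 < c ∧ Quaternion.normSq (c • q) = 1 := by
  have : 0 < ‖q‖ := norm_pos_iff.2 hq
  refine ⟨‖q‖⁻¹, inv_pos.2 this, ?_⟩
  rw [← nsq_iff, norm_smul, norm_inv, norm_norm, inv_mul_cancel₀ this.ne']

theorem frame_aux {r1 r2 : HH} (h1 : r1 * r1 = -1) (h2 : r2 * r2 = -1) (h : r2 * r1 = -(r1 * r2))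
    (q : HH) : 
    let y := q - qi * q * r1 - qj * q * r2 - qk * q * (r1 * r2)
    qi * y = y * r1 ∧ qj * y = y * r2 := by
  intro y
  have ii : qi * qi = -1 := by rw [one_mkq]; ext <;> simp [qi]
  have jj : qj * qj = -1 := by rw [one_mkq]; ext <;> simp [qj]
  have ij : qi * qj = qk := by ext <;> simp [qi, qj, qk]
  have ik : qi * qk = -qj := by ext <;> simp [qi, qj, qk]
  have ji : qj * qi = -qk := by ext <;> simp [qi, qj, qk]
  have jk : qj * qk = qi := by ext <;> simp [qi, qj, qk]
  have h31 : r1 * r2 * r1 = r2 := by rw [mul_assoc, h, mul_neg, ← mul_assoc, h1]; simp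
  have h32 : r1 * r2 * r2 = -r1 := by rw [mul_assoc, h2]; simp
  constructor
  · have e1 : qi * y = qi * q - (qi * qi) * q * r1 - (qi * qj) * q * r2 - (qi * qk) * q * (r1 * r2) := by
      simp only [y]; noncomm_ring
    have e2 : y * r1 = q * r1 - qi * q * (r1 * r1) - qj * q * (r2 * r1) - qk * q * (r1 * r2 * r1) := by
      simp only [y]; noncomm_ring
    rw [e1, e2, ii, ij, ik, h1, h, h31]; noncomm_ring
  · have e1 : qj * y = qj * q - (qj * qi) * q * r1 - (qj * qj) * q * r2 - (qj * qk) * q * (r1 * r2) := by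
      simp only [y]; noncomm_ring
    have e2 : y * r2 = q * r2 - qi * q * (r1 * r2) - qj * q * (r2 * r2) - qk * q * (r1 * r2 * r2) := by
      simp only [y]; noncomm_ring
    rw [e1, e2, ji, jj, jk, h2, h32]; noncomm_ring

theorem frame {r1 r2 : HH} (n1 : Quaternion.normSq r1 = 1) (n2 : Quaternion.normSq r2 = 1)
    (i1 : r1.re = 0) (i2 : r2.re = 0)
    (o : r1.imI * r2.imI + r1.imJ * r2.imJ + r1.imK * r2.imK = 0) :
    ∃ y, Quaternion.normSq y = 1 ∧ rr1 y = r1 ∧ rr2 y = r2 := by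
  have h1 := imag_sq i1 n1
  have h2 := imag_sq i2 n2
  have i3 : (r1 * r2).re = 0 := by simp [i1, i2]; linarith
  have h : r2 * r1 = -(r1 * r2) := by
    have := imag_star i3
    rw [star_mul, imag_star i1, imag_star i2] at this
    rw [← this]; simp
  have key : ∃ q : HH, q - qi * q * r1 - qj * q * r2 - qk * q * (r1 * r2) ≠ 0 := by
    by_contra hc
    push Not at hc
    have c1 := congrArg (fun x : HH => x.re) (hc (mkq 1 0 0 0))
    have c2 := congrArg (fun x : HH => x.imI) (hc qi)
    have c3 := congrArg (fun x : HH => x.imJ) (hc qj)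
    have c4 := congrArg (fun x : HH => x.imK) (hc qk)
    generalize r1 * r2 = r3 at *
    simp [qi, qj, qk, i1, i2, i3, z_re, z_imI, z_imJ, z_imK] at c1 c2 c3 c4
    linarith
  obtain ⟨q, hq⟩ := key
  obtain ⟨f1, f2⟩ := frame_aux h1 h2 h q
  generalize q - qi * q * r1 - qj * q * r2 - qk * q * (r1 * r2) = y at *
  obtain ⟨c, _, hn⟩ := q_normalize hq
  refine ⟨c • y, hn, ?_, ?_⟩
  · have : qi * (c • y) = (c • y) * r1 := by rw [mul_smul_comm, f1, smul_mul_assoc]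
    rw [rr1, mul_assoc, this, ← mul_assoc, star_mul_unit hn, one_mul]
  · have : qj * (c • y) = (c • y) * r2 := by rw [mul_smul_comm, f2, smul_mul_assoc]
    rw [rr2, mul_assoc, this, ← mul_assoc, star_mul_unit hn, one_mul]

theorem AA_of {D x y A B : ℝ} (h0 : 0 ≤ D) (h1 : D ≤ 1) (h : x ^ 2 + y ^ 2 ≤ 1) (hA : 0 ≤ A)
    (hs : A ^ 2 + B ^ 2 = 1) (hb : 2 * A ^ 2 = 1 + (1 - D) * (A ^ 2 * x ^ 2 - B ^ 2 * y ^ 2)) :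
    AA D x y = A := by
  have e := AA_sq h0 h1 h
  have hd := den_pos h0 h1 h
  have : A ^ 2 * (2 - (1 - D) * (x ^ 2 + y ^ 2)) = 1 - (1 - D) * y ^ 2 := by
    linear_combination hb - (1 - D) * y ^ 2 * hs
  have e2 : AA D x y ^ 2 = A ^ 2 := mul_right_cancel₀ hd.ne' (e.trans this.symm)
  exact (sq_eq_sq₀ (AA_nonneg _ _ _) hA).1 e2

theorem uv_frame {D : ℝ} {U V : HH} (h0 : 0 ≤ D) (h1 : D ≤ 1) (h : UVData D U V) :
    ∃ (r1 r2 : HH) (A B : ℝ), Quaternion.normSq r1 = 1 ∧ Quaternion.normSq r2 = 1 ∧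
      r1.re = 0 ∧ r2.re = 0 ∧ r1.imI * r2.imI + r1.imJ * r2.imJ + r1.imK * r2.imK = 0 ∧
      0 ≤ A ∧ 0 ≤ B ∧ U = A • r1 ∧ V = B • r2 := by
  obtain ⟨u, v, o, s, b⟩ := h
  have ni : Quaternion.normSq qi = 1 := by rw [Quaternion.normSq_def']; simp [qi]
  by_cases hU : U = 0
  · subst hU
    simp only [z_imI, z_imJ, z_imK] at s b
    norm_num at s b
    have hk : V.imK ^ 2 = 1 := by nlinarith [sq_nonneg V.imI, sq_nonneg V.imJ, sq_nonneg V.imK]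
    have hi : V.imI = 0 := by nlinarith [sq_nonneg V.imI, sq_nonneg V.imJ, sq_nonneg V.imK]
    refine ⟨qi, V, 0, 1, ni, ?_, rfl, v, ?_, le_rfl, zero_le_one, by simp, by simp⟩
    · rw [Quaternion.normSq_def', v]; linarith
    · simp [qi, hi]
  by_cases hV : V = 0
  · subst hV
    simp only [z_imI, z_imJ, z_imK] at s b
    norm_num at s b
    have hk : U.imK ^ 2 = 1 := by nlinarith [sq_nonneg U.imI, sq_nonneg U.imJ, sq_nonneg U.imK]
    have hi : U.imI = 0 := by nlinarith [sq_nonneg U.imI, sq_nonneg U.imJ, sq_nonneg U.imK]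
    refine ⟨U, qi, 1, 0, ?_, ni, u, rfl, ?_, zero_le_one, le_rfl, by simp, by simp⟩
    · rw [Quaternion.normSq_def', u]; linarith
    · simp [qi, hi]
  obtain ⟨c, hc, nc⟩ := q_normalize hU
  obtain ⟨d, hd, nd⟩ := q_normalize hV
  refine ⟨c • U, d • V, c⁻¹, d⁻¹, nc, nd, by simp [u], by simp [v], ?_, by positivity, by positivity,
    ?_, ?_⟩
  · simp; linear_combination c * d * o
  · rw [smul_smul, inv_mul_cancel₀ hc.ne', one_smul]
  · rw [smul_smul, inv_mul_cancel₀ hd.ne', one_smul]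

theorem uv_surj {D : ℝ} {U V : HH} (h0 : 0 ≤ D) (h1 : D ≤ 1) (h : UVData D U V) :
    ∃ y, Quaternion.normSq y = 1 ∧ UU y D = U ∧ VV y D = V := by
  obtain ⟨r1, r2, A, B, n1, n2, i1, i2, o, hA, hB, rfl, rfl⟩ := uv_frame h0 h1 h
  obtain ⟨y, ny', e1, e2⟩ := frame n1 n2 i1 i2 o
  obtain ⟨_, _, _, s, b⟩ := h
  have k1 := rr1_k y
  have k2 := rr2_k y
  rw [e1] at k1
  rw [e2] at k2
  have a1 := nsq_expand n1
  have a2 := nsq_expand n2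
  rw [i1] at a1
  rw [i2] at a2
  simp at s b
  have s' : A ^ 2 + B ^ 2 = 1 := by linear_combination s - A ^ 2 * a1 - B ^ 2 * a2
  have b' : 2 * A ^ 2 = 1 + (1 - D) * (A ^ 2 * nx y ^ 2 - B ^ 2 * ny y ^ 2) := by
    rw [← k1, ← k2]; linear_combination b - 2 * A ^ 2 * a1
  have hn : nx y ^ 2 + ny y ^ 2 ≤ 1 := by nlinarith [nxyz ny', sq_nonneg (nz y)]
  refine ⟨y, ny', ?_, ?_⟩
  · rw [UU, e1, AA_of h0 h1 hn hA s' b']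
  · rw [VV, e2, AA_of (B := A) h0 h1 (by linarith) hB (by linarith)]
    linear_combination 2 * s' - b'

structure GData (g R S : HH) : Prop where
  a : (star g * (R * S)).re = 0
  b : (star g * R).re = 0
  c : (R * star S * star R * g).re = 0

theorem rot_inv {c s : ℝ} (h : c ^ 2 + s ^ 2 = 1) {P : HH} (hP : P.re = 0) :
    rotp c s (rotp c (-s) P) = P := by
  ext <;> simp [rotp, hP]
  · linear_combination P.imI * h
  · linear_combination P.imJ * h

theorem half_surj {D : ℝ} {R S : HH} (h0 : 0 ≤ D) (h1 : D ≤ 1) (nR : Quaternion.normSq R = 1)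
    (nS : Quaternion.normSq S = 1) (h : GData (g0 D) R S) :
    ∃ y, Quaternion.normSq y = 1 ∧ hR y D = R ∧ hS y D = S := by
  obtain ⟨ha, hb, hc⟩ := h
  have ng := g0_unit h0 h1
  have nQ : Quaternion.normSq (star (g0 D) * (R * S)) = 1 := nsq_mul (nsq_star ng) (nsq_mul nR nS)
  have nP : Quaternion.normSq (R * star S * star R * g0 D) = 1 :=
    nsq_mul (nsq_mul (nsq_mul nR (nsq_star nS)) (nsq_star nR)) ng
  have ePQ : (R * star S * star R * g0 D) * (star (g0 D) * (R * S)) = R := by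
    have : (R * star S * star R * g0 D) * (star (g0 D) * (R * S)) =
      R * (star S * (star R * (g0 D * star (g0 D)) * R) * S) := by noncomm_ring
    rw [this, mul_star_unit ng, mul_one, star_mul_unit nR, mul_one, star_mul_unit nS, mul_one]
  have eS : star R * g0 D * (star (g0 D) * (R * S)) = S := by
    have : star R * g0 D * (star (g0 D) * (R * S)) = star R * (g0 D * star (g0 D)) * R * S := by
      noncomm_ring
    rw [this, mul_star_unit ng, mul_one, star_mul_unit nR, one_mul]
  generalize star (g0 D) * (R * S) = Q at *
  generalize R * star S * star R * g0 D = P at *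
  have ec := cc_sq h0
  have es := ss_sq h1
  have ecs : cc D ^ 2 + ss D ^ 2 = 1 := by linarith
  have ecs' : cc D ^ 2 + (-ss D) ^ 2 = 1 := by linarith
  set U : HH := (1 / 2 : ℝ) • (rotp (cc D) (-ss D) P + rotp (cc D) (ss D) Q) with hU
  set V : HH := (1 / 2 : ℝ) • (rotp (cc D) (-ss D) P - rotp (cc D) (ss D) Q) with hV
  have e1 : U + V = rotp (cc D) (-ss D) P := by
    rw [hU, hV]; module
  have e2 : U - V = rotp (cc D) (ss D) Q := by
    rw [hU, hV]; module
  have pP : Pof D U V = P := by rw [Pof, e1, rot_inv ecs hc]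
  have pQ : Qof D U V = Q := by
    rw [Qof, e2]
    have := rot_inv ecs' ha
    rwa [neg_neg] at this
  have np := nsq_expand nP
  have nq := nsq_expand nQ
  rw [hc] at np
  rw [ha] at nq
  have uv : UVData D U V := by
    have bb : (star (g0 D) * (P * Q)).re = 0 := by rw [ePQ]; exact hb
    simp [g0, hc, ha] at bb
    constructor
    · simp [hU, rotp]
    · simp [hV, rotp]
    · simp [hU, hV, rotp]
      linear_combination (np - nq) / 4 + (P.imI ^ 2 + P.imJ ^ 2 - Q.imI ^ 2 - Q.imJ ^ 2) / 4 * ecs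
    · simp [hU, hV, rotp]
      linear_combination (np + nq) / 2 + (P.imI ^ 2 + P.imJ ^ 2 + Q.imI ^ 2 + Q.imJ ^ 2) / 2 * ecs
    · simp [hU, hV, rotp]
      set c := cc D
      set t := ss D
      have hD : D = c ^ 2 - t ^ 2 := by linarith
      rw [hD] at bb ⊢
      linear_combination (np + nq) / 2 + (P.imI ^ 2 + P.imJ ^ 2 + Q.imI ^ 2 + Q.imJ ^ 2) / 2 * ecs - bb
  obtain ⟨y, hy, f1, f2⟩ := uv_surj h0 h1 uv
  have g1 : PP y D = P := by rw [PP, f1, f2, pP]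
  have g2 : QQ y D = Q := by rw [QQ, f1, f2, pQ]
  refine ⟨y, hy, ?_, ?_⟩
  · rw [hR, g1, g2, ePQ]
  · rw [hS, hR, g1, g2, ePQ, eS]

end PJ

section PK

theorem rot_to_k {g : HH} (h : Quaternion.normSq g = 1) :
    ∃ u s, Quaternion.normSq u = 1 ∧ 0 ≤ s ∧ g * u = u * mkq g.re 0 0 s := by
  set s := √(g.imI ^ 2 + g.imJ ^ 2 + g.imK ^ 2) with hs
  have s2 : s ^ 2 = g.imI ^ 2 + g.imJ ^ 2 + g.imK ^ 2 := Real.sq_sqrt (by positivity)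
  have s0 : 0 ≤ s := Real.sqrt_nonneg _
  by_cases hq : mkq (s + g.imK) (-g.imJ) g.imI 0 = 0
  · have c1 := congrArg (fun x : HH => x.re) hq
    have c2 := congrArg (fun x : HH => x.imI) hq
    have c3 := congrArg (fun x : HH => x.imJ) hq
    simp [z_re, z_imI, z_imJ] at c1 c2 c3
    have c4 : g.imK = -s := by linarith
    refine ⟨qi, s, by rw [Quaternion.normSq_def']; simp [qi], s0, ?_⟩
    ext <;> simp [qi, c2, c3, c4]
  · obtain ⟨c, hc, hn⟩ := q_normalize hq
    refine ⟨_, s, hn, s0, ?_⟩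
    rw [mul_smul_comm, smul_mul_assoc]
    congr 1
    ext <;> simp
    · ring
    · ring
    · ring
    · linear_combination -s2

theorem gdata_of_comm {g R S : HH} (nR : Quaternion.normSq R = 1) (nS : Quaternion.normSq S = 1)
    (hg : R * S * star R * star S = g) (c : ℝ) : GData (c • (1 - g)) R S := by
  have hg' : star g = S * R * star S * star R := by
    rw [← hg]; simp only [star_mul, star_star, mul_assoc]
  have s1 : star (c • (1 - g)) = c • (1 - star g) := by simp
  constructor
  · rw [s1, hg', smul_mul_assoc, Quaternion.re_smul]
    have : (1 - S * R * star S * star R) * (R * S) = R * S - S * R * (star S * (star R * R) * S) := by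
      noncomm_ring
    rw [this, star_mul_unit nR, mul_one, star_mul_unit nS, mul_one, Quaternion.re_sub, re_comm R S]; simp
  · rw [s1, hg', smul_mul_assoc, Quaternion.re_smul]
    have : (1 - S * R * star S * star R) * R = R - S * R * star S * (star R * R) := by
      noncomm_ring
    rw [this, star_mul_unit nR, mul_one, Quaternion.re_sub, re_comm (S * R) (star S), ← mul_assoc,
      star_mul_unit nS, one_mul]; simp
  · rw [← hg, mul_smul_comm, Quaternion.re_smul]
    have : R * star S * star R * (1 - R * S * star R * star S) =
       R * star S * star R - R * (star S * (star R * R) * S) * star R * star S := by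
      noncomm_ring
    rw [this, star_mul_unit nR, mul_one, star_mul_unit nS, mul_one, mul_star_unit nR, one_mul,
     Quaternion.re_sub, re_comm (R * star S) (star R), ← mul_assoc,
      star_mul_unit nR, one_mul]; simp

theorem gdata_of_one {w R S : HH} (nR : Quaternion.normSq R = 1) 
    (hc : R * S = S * R) (hw : w.re = 0)
    (o1 : w.imI * R.imI + w.imJ * R.imJ + w.imK * R.imK = 0)
    (o2 : w.imI * S.imI + w.imJ * S.imJ + w.imK * S.imK = 0) : GData w R S := by
  have c2 := congrArg (fun x : HH => x.imI) hc
  have c3 := congrArg (fun x : HH => x.imJ) hc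
  have c4 := congrArg (fun x : HH => x.imK) hc
  simp at c2 c3 c4
  constructor
  · simp [hw]
    linear_combination S.re * o1 + R.re * o2 + w.imI / 2 * c2 + w.imJ / 2 * c3 + w.imK / 2 * c4
  · simp [hw]
    linear_combination o1
  · have hs : R * star S = star S * R := by
      ext <;> simp
      · ring
      · linear_combination -c2
      · linear_combination -c3
      · linear_combination -c4
    rw [hs, mul_assoc (star S), mul_star_unit nR, mul_one]
    simp [hw]
    linear_combination o2

theorem par_exists {R S : HH} (hc : R * S = S * R) : ∃ v : HH, v.re = 0 ∧
    (∃ a : ℝ, R.imI = a * v.imI ∧ R.imJ = a * v.imJ ∧ R.imK = a * v.imK) ∧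
    (∃ a : ℝ, S.imI = a * v.imI ∧ S.imJ = a * v.imJ ∧ S.imK = a * v.imK) := by
  have c2 := congrArg (fun x : HH => x.imI) hc
  have c3 := congrArg (fun x : HH => x.imJ) hc
  have c4 := congrArg (fun x : HH => x.imK) hc
  simp at c2 c3 c4
  by_cases h1 : R.imI = 0
  · by_cases h2 : R.imJ = 0
    · by_cases h3 : R.imK = 0
      · exact ⟨mkq 0 S.imI S.imJ S.imK, rfl, ⟨0, by simp [h1], by simp [h2], by simp [h3]⟩, ⟨1, by simp⟩⟩
      · refine ⟨mkq 0 R.imI R.imJ R.imK, rfl, ⟨1, by simp⟩, ⟨S.imK / R.imK, ?_, ?_, ?_⟩⟩ <;> simp <;>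
          field_simp <;> linarith
    · refine ⟨mkq 0 R.imI R.imJ R.imK, rfl, ⟨1, by simp⟩, ⟨S.imJ / R.imJ, ?_, ?_, ?_⟩⟩ <;> simp <;>
        field_simp <;> linarith
  · refine ⟨mkq 0 R.imI R.imJ R.imK, rfl, ⟨1, by simp⟩, ⟨S.imI / R.imI, ?_, ?_, ?_⟩⟩ <;> simp <;>
      field_simp <;> linarith

theorem perp_exists (v v' : HH) : ∃ w : HH, Quaternion.normSq w = 1 ∧ w.re = 0 ∧
    w.imI * v.imI + w.imJ * v.imJ + w.imK * v.imK = 0 ∧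
    w.imI * v'.imI + w.imJ * v'.imJ + w.imK * v'.imK = 0 := by
  have hd : (!![v.imI, v.imJ, v.imK; v'.imI, v'.imJ, v'.imK; 0, 0, 0] :
      Matrix (Fin 3) (Fin 3) ℝ).det = 0 := by
    simp [Matrix.det_fin_three]
  obtain ⟨x, hx, e⟩ := Matrix.exists_mulVec_eq_zero_iff.2 hd
  have e1 := congrFun e 0
  have e2 := congrFun e 1
  simp [Matrix.mulVec, dotProduct, Fin.sum_univ_three] at e1 e2
  have hq : mkq 0 (x 0) (x 1) (x 2) ≠ 0 := by
    intro hq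
    apply hx
    have c2 := congrArg (fun x : HH => x.imI) hq
    have c3 := congrArg (fun x : HH => x.imJ) hq
    have c4 := congrArg (fun x : HH => x.imK) hq
    simp [z_imI, z_imJ, z_imK] at c2 c3 c4
    ext i; fin_cases i
    · exact c2
    · exact c3
    · exact c4
  obtain ⟨c, hc, hn⟩ := q_normalize hq
  refine ⟨_, hn, by simp, ?_, ?_⟩
  · simp; linear_combination c * e1
  · simp; linear_combination c * e2

theorem g0_exists {R S R' S' : HH} (nR : Quaternion.normSq R = 1) (nS : Quaternion.normSq S = 1)
    (nR' : Quaternion.normSq R' = 1) (nS' : Quaternion.normSq S' = 1)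
    (h : R * S * star R * star S = R' * S' * star R' * star S') :
    ∃ g, Quaternion.normSq g = 1 ∧ 0 ≤ g.re ∧ GData g R S ∧ GData g R' S' := by
  by_cases hg : R * S * star R * star S = 1
  · have cm : ∀ R S : HH, Quaternion.normSq R = 1 → Quaternion.normSq S = 1 →
        R * S * star R * star S = 1 → R * S = S * R := by
      intro R S nR nS h
      have : R * S * star R * star S * (S * R) = R * S := by
        have : R * S * star R * star S * (S * R) = R * S * (star R * (star S * S) * R) := by
          noncomm_ring
        rw [this, star_mul_unit nS, mul_one, star_mul_unit nR, mul_one]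
      rw [← this, h, one_mul]
    have c1 := cm R S nR nS hg
    have c2 := cm R' S' nR' nS' (h ▸ hg)
    obtain ⟨v, _, ⟨a, a1, a2, a3⟩, ⟨b, b1, b2, b3⟩⟩ := par_exists c1
    obtain ⟨v', _, ⟨a', a1', a2', a3'⟩, ⟨b', b1', b2', b3'⟩⟩ := par_exists c2
    obtain ⟨w, hw, w0, o1, o2⟩ := perp_exists v v'
    refine ⟨w, hw, w0.ge, gdata_of_one nR c1 w0 ?_ ?_, gdata_of_one nR' c2 w0 ?_ ?_⟩
    · rw [a1, a2, a3]; linear_combination a * o1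
    · rw [b1, b2, b3]; linear_combination b * o1
    · rw [a1', a2', a3']; linear_combination a' * o2
    · rw [b1', b2', b3']; linear_combination b' * o2
  · have hq : 1 - R * S * star R * star S ≠ 0 := fun h => hg (sub_eq_zero.1 h).symm
    obtain ⟨c, hc, hn⟩ := q_normalize hq
    refine ⟨_, hn, ?_, gdata_of_comm nR nS rfl c, gdata_of_comm nR' nS' h.symm c⟩
    have n1 := nsq_expand (nsq_mul (nsq_mul (nsq_mul nR nS) (nsq_star nR)) (nsq_star nS))
    generalize R * S * star R * star S = g at *
    have : g.re ≤ 1 := by nlinarith [sq_nonneg g.re, sq_nonneg g.imI, sq_nonneg g.imJ, sq_nonneg g.imK]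
    rw [one_mkq, Quaternion.re_smul, Quaternion.re_sub, mkq_re]
    exact mul_nonneg hc.le (by linarith)

theorem gdata_cnj {g R S u : HH} (hu : Quaternion.normSq u = 1) (h : GData g R S) :
    GData (star u * g * u) (star u * R * u) (star u * S * u) := by
  have sw : ∀ X : HH, star (star u * X * u) = star u * star X * u := by
    intro X; rw [star_mul, star_mul, star_star, mul_assoc]
  obtain ⟨a, b, c⟩ := h
  constructor
  · rw [sw, cnj_mul hu, cnj_mul hu, re_cnj _ hu, a]
  · rw [sw, cnj_mul hu, re_cnj _ hu, b]
  · rw [sw, sw, cnj_mul hu, cnj_mul hu, cnj_mul hu, re_cnj _ hu, c]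

theorem uncnj {u X Y : HH} (hu : Quaternion.normSq u = 1) (h : Y = star u * X * u) :
    X = u * Y * star u := by
  have : u * (star u * X * u) * star u = (u * star u) * X * (u * star u) := by noncomm_ring
  rw [h, this, mul_star_unit hu, one_mul, mul_one]

theorem F_surj {R S R' S' : HH} (nR : Quaternion.normSq R = 1) (nS : Quaternion.normSq S = 1)
    (nR' : Quaternion.normSq R' = 1) (nS' : Quaternion.normSq S' = 1)
    (h : R * S * star R * star S = R' * S' * star R' * star S') :
    ∃ y1 y2 D u, WOK y1 y2 D ∧ Quaternion.normSq u = 1 ∧ R = u * hR y1 D * star u ∧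
      S = u * hS y1 D * star u ∧ R' = u * hR y2 D * star u ∧ S' = u * hS y2 D * star u := by
  obtain ⟨g, ng, g0', G1, G2⟩ := g0_exists nR nS nR' nS' h
  obtain ⟨u, s, nu, hs, e⟩ := rot_to_k ng
  have n := nsq_expand ng
  have d1 : g.re ≤ 1 := by nlinarith [sq_nonneg g.re, sq_nonneg g.imI, sq_nonneg g.imJ, sq_nonneg g.imK]
  have e1 : star u * g * u = mkq g.re 0 0 s := by
    rw [mul_assoc, e, ← mul_assoc, star_mul_unit nu, one_mul]
  have e2 : mkq g.re 0 0 s = g0 g.re := by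
    have a := nsq_expand (nsq_mul (nsq_mul (nsq_star nu) ng) nu)
    rw [e1] at a
    have b := nsq_expand (g0_unit g0' d1)
    simp [g0] at a b
    have c : s ^ 2 = (2 * cc g.re * ss g.re) ^ 2 := by linarith
    have p : 0 ≤ 2 * cc g.re * ss g.re :=
      mul_nonneg (mul_nonneg two_pos.le (Real.sqrt_nonneg _)) (Real.sqrt_nonneg _)
    rw [g0, (sq_eq_sq₀ hs p).1 c]
  have H1 := gdata_cnj nu G1
  have H2 := gdata_cnj nu G2
  rw [e1, e2] at H1 H2
  obtain ⟨y1, m1, f1, f2⟩ := half_surj g0' d1 (nsq_mul (nsq_mul (nsq_star nu) nR) nu)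
    (nsq_mul (nsq_mul (nsq_star nu) nS) nu) H1
  obtain ⟨y2, m2, f3, f4⟩ := half_surj g0' d1 (nsq_mul (nsq_mul (nsq_star nu) nR') nu)
    (nsq_mul (nsq_mul (nsq_star nu) nS') nu) H2
  exact ⟨y1, y2, g.re, u, ⟨m1, m2, g0', d1⟩, nu, uncnj nu f1, uncnj nu f2, uncnj nu f3, uncnj nu f4⟩

end PK


theorem cont_mkq {X : Type*} [TopologicalSpace X] {a b c d : X → ℝ} (ha : Continuous a)
    (hb : Continuous b) (hc : Continuous c) (hd : Continuous d) :
    Continuous (fun x => mkq (a x) (b x) (c x) (d x)) := by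
  have : (fun x => mkq (a x) (b x) (c x) (d x)) =
      fun x => a x • mkq 1 0 0 0 + b x • qi + c x • qj + d x • qk := by
    funext x; ext <;> simp [qi, qj, qk]
  rw [this]
  fun_prop

abbrev KS : Set (HH × HH × ℝ × HH) :=
  Metric.sphere 0 1 ×ˢ Metric.sphere 0 1 ×ˢ Set.Icc 0 1 ×ˢ Metric.sphere 0 1

abbrev KK : Type := KS

instance : CompactSpace KK := by
  apply isCompact_iff_compactSpace.1
  exact (isCompact_sphere _ _).prod ((isCompact_sphere _ _).prod (isCompact_Icc.prod (isCompact_sphere _ _)))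

theorem sph_iff (q : HH) : q ∈ Metric.sphere (0 : HH) 1 ↔ Quaternion.normSq q = 1 := by
  rw [mem_sphere_zero_iff_norm, nsq_iff]

theorem KK.ok (p : KK) : WOK p.1.1 p.1.2.1 p.1.2.2.1 :=
  ⟨(sph_iff _).1 p.2.1, (sph_iff _).1 p.2.2.1, p.2.2.2.1.1, p.2.2.2.1.2⟩
theorem KK.un (p : KK) : Quaternion.normSq p.1.2.2.2 = 1 := (sph_iff _).1 p.2.2.2.2

section cont
variable {X : Type*} [TopologicalSpace X] {y : X → HH} {D : X → ℝ}

theorem cont_nx (hy : Continuous y) : Continuous (fun x => nx (y x)) := by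
  have h1 := Quaternion.continuous_re.comp hy
  have h2 := Quaternion.continuous_imI.comp hy
  have h3 := Quaternion.continuous_imJ.comp hy
  have h4 := Quaternion.continuous_imK.comp hy
  simp only [nx]
  exact continuous_const.mul ((h1.mul h3).add (h4.mul h2))
theorem cont_ny (hy : Continuous y) : Continuous (fun x => ny (y x)) := by
  have h1 := Quaternion.continuous_re.comp hy
  have h2 := Quaternion.continuous_imI.comp hy
  have h3 := Quaternion.continuous_imJ.comp hy
  have h4 := Quaternion.continuous_imK.comp hy
  simp only [ny]
  exact continuous_const.mul ((h4.mul h3).sub (h1.mul h2))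

theorem cont_cc (hD : Continuous D) : Continuous (fun x => cc (D x)) := by
  simp only [cc]; fun_prop
theorem cont_ss (hD : Continuous D) : Continuous (fun x => ss (D x)) := by
  simp only [ss]; fun_prop

theorem cont_AA {a b : X → ℝ} (hD : Continuous D) (ha : Continuous a) (hb : Continuous b)
    (h : ∀ x, 0 < 2 - (1 - D x) * (a x ^ 2 + b x ^ 2)) : Continuous (fun x => AA (D x) (a x) (b x)) := by
  simp only [AA]
  apply Real.continuous_sqrt.comp
  apply Continuous.div
  · fun_prop
  · fun_prop
  · intro x; exact (h x).ne'

theorem cont_rotp {c s : X → ℝ} {U : X → HH} (hc : Continuous c) (hs : Continuous s)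
    (hU : Continuous U) : Continuous (fun x => rotp (c x) (s x) (U x)) := by
  have h2 := Quaternion.continuous_imI.comp hU
  have h3 := Quaternion.continuous_imJ.comp hU
  have h4 := Quaternion.continuous_imK.comp hU
  simp only [rotp]
  exact cont_mkq continuous_const ((hc.mul h2).sub (hs.mul h3)) ((hc.mul h3).add (hs.mul h2)) h4

theorem nxy_le {y : HH} (h : Quaternion.normSq y = 1) : nx y ^ 2 + ny y ^ 2 ≤ 1 := by
  nlinarith [nxyz h, sq_nonneg (nz y)]

theorem cont_star {f : X → HH} (hf : Continuous f) : Continuous (fun x => star (f x)) :=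
  continuous_star.comp hf

theorem cont_UU (hy : Continuous y) (hD : Continuous D) (h1 : ∀ x, Quaternion.normSq (y x) = 1)
    (h2 : ∀ x, 0 ≤ D x) (h3 : ∀ x, D x ≤ 1) : Continuous (fun x => UU (y x) (D x)) := by
  simp only [UU, rr1]
  refine (cont_AA hD (cont_nx hy) (cont_ny hy) ?_).smul (((cont_star hy).mul continuous_const).mul hy)
  intro x
  exact den_pos (h2 x) (h3 x) (nxy_le (h1 x))
theorem cont_VV (hy : Continuous y) (hD : Continuous D) (h1 : ∀ x, Quaternion.normSq (y x) = 1)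
    (h2 : ∀ x, 0 ≤ D x) (h3 : ∀ x, D x ≤ 1) : Continuous (fun x => VV (y x) (D x)) := by
  simp only [VV, rr2]
  refine (cont_AA hD (cont_ny hy) (cont_nx hy) ?_).smul (((cont_star hy).mul continuous_const).mul hy)
  intro x
  exact den_pos (h2 x) (h3 x) (by linarith [nxy_le (h1 x)])

theorem cont_PP (hy : Continuous y) (hD : Continuous D) (h1 : ∀ x, Quaternion.normSq (y x) = 1)
    (h2 : ∀ x, 0 ≤ D x) (h3 : ∀ x, D x ≤ 1) : Continuous (fun x => PP (y x) (D x)) := by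
  simp only [PP, Pof]
  exact cont_rotp (cont_cc hD) (cont_ss hD) ((cont_UU hy hD h1 h2 h3).add (cont_VV hy hD h1 h2 h3))
theorem cont_QQ (hy : Continuous y) (hD : Continuous D) (h1 : ∀ x, Quaternion.normSq (y x) = 1)
    (h2 : ∀ x, 0 ≤ D x) (h3 : ∀ x, D x ≤ 1) : Continuous (fun x => QQ (y x) (D x)) := by
  simp only [QQ, Qof]
  exact cont_rotp (cont_cc hD) (cont_ss hD).neg ((cont_UU hy hD h1 h2 h3).sub (cont_VV hy hD h1 h2 h3))
theorem cont_hR (hy : Continuous y) (hD : Continuous D) (h1 : ∀ x, Quaternion.normSq (y x) = 1)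
    (h2 : ∀ x, 0 ≤ D x) (h3 : ∀ x, D x ≤ 1) : Continuous (fun x => hR (y x) (D x)) := by
  simp only [hR]
  exact (cont_PP hy hD h1 h2 h3).mul (cont_QQ hy hD h1 h2 h3)
theorem cont_hS (hy : Continuous y) (hD : Continuous D) (h1 : ∀ x, Quaternion.normSq (y x) = 1)
    (h2 : ∀ x, 0 ≤ D x) (h3 : ∀ x, D x ≤ 1) : Continuous (fun x => hS (y x) (D x)) := by
  simp only [hS]
  have hg : Continuous (fun x => g0 (D x)) := by
    simp only [g0]
    exact cont_mkq hD continuous_const continuous_const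
      ((continuous_const.mul (cont_cc hD)).mul (cont_ss hD))
  exact ((cont_star (cont_hR hy hD h1 h2 h3)).mul hg).mul (cont_QQ hy hD h1 h2 h3)

theorem cont_ca (hy : Continuous y) : Continuous (fun x => ca (y x)) := by
  have : (fun x => ca (y x)) = fun x => (((y x).re : ℝ) : ℂ) + (((y x).imK : ℝ) : ℂ) * Complex.I := by
    funext x; apply Complex.ext <;> simp [ca_re, ca_im]
  rw [this]
  have h1 := Quaternion.continuous_re.comp hy
  have h4 := Quaternion.continuous_imK.comp hy
  exact (Complex.continuous_ofReal.comp h1).add ((Complex.continuous_ofReal.comp h4).mul continuous_const)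
theorem cont_cb (hy : Continuous y) : Continuous (fun x => cb (y x)) := by
  have : (fun x => cb (y x)) = fun x => (((y x).imI : ℝ) : ℂ) + (((y x).imJ : ℝ) : ℂ) * Complex.I := by
    funext x; apply Complex.ext <;> simp [cb_re, cb_im]
  rw [this]
  have h1 := Quaternion.continuous_imI.comp hy
  have h4 := Quaternion.continuous_imJ.comp hy
  exact (Complex.continuous_ofReal.comp h1).add ((Complex.continuous_ofReal.comp h4).mul continuous_const)

theorem cont_gg {y' : X → HH} (hy : Continuous y) (hy' : Continuous y') (hD : Continuous D) :
    Continuous (fun x => gg (y x) (y' x) (D x)) := by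
  have a := cont_ca hy
  have b := cont_cb hy
  have a' := cont_ca hy'
  have b' := cont_cb hy'
  have hm : Continuous (fun x => mm (y x) (y' x) (D x)) := by
    simp only [mm, mf, lam, rho]
    fun_prop
  simp only [gg, zz]
  apply continuous_pi
  intro i
  fin_cases i <;> simp <;> fun_prop

end cont

theorem f_mem {y1 y2 u : HH} {D : ℝ} (h : WOK y1 y2 D) (hu : Quaternion.normSq u = 1) :
    memX (u * hR y1 D * star u, u * hS y1 D * star u, u * hS y2 D * star u, u * hR y2 D * star u) := by
  have su := nsq_star hu
  have n : ∀ X : HH, Quaternion.normSq X = 1 → Quaternion.normSq (u * X * star u) = 1 :=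
    fun X hX => nsq_mul (nsq_mul hu hX) su
  have r1 := hR_unit h.n1 h.d0 h.d1
  have s1 := hS_unit h.n1 h.d0 h.d1
  have r2 := hR_unit h.n2 h.d0 h.d1
  have s2 := hS_unit h.n2 h.d0 h.d1
  have sw : ∀ X : HH, star (u * X * star u) = u * star X * star u := by
    intro X; rw [star_mul, star_mul, star_star, mul_assoc]
  have cm : ∀ a b : HH, (u * a * star u) * (u * b * star u) = u * (a * b) * star u := by
    intro a b
    have := cnj_mul su a b
    rwa [star_star] at this
  refine ⟨(nsq_iff _).2 (n _ r1), (nsq_iff _).2 (n _ s1), (nsq_iff _).2 (n _ s2),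
    (nsq_iff _).2 (n _ r2), ?_⟩
  simp only
  rw [inv_unit (n _ r1), inv_unit (n _ s1), inv_unit (n _ r2), inv_unit (n _ s2)]
  simp only [sw, cm]
  have e1 := h_comm h.n1 h.d0 h.d1
  have e2 := h_comm h.n2 h.d0 h.d1
  have e3 : hS y2 D * hR y2 D * star (hS y2 D) * star (hR y2 D) = star (-(g0 D * g0 D)) := by
    rw [← e2]; simp only [star_mul, star_star, mul_assoc]
  have ng : Quaternion.normSq (-(g0 D * g0 D)) = 1 := by
    rw [Quaternion.normSq_neg]; exact nsq_mul (g0_unit h.d0 h.d1) (g0_unit h.d0 h.d1)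
  rw [e1, e3, mul_star_unit ng, mul_one, mul_star_unit hu]

def FF (p : KK) : GenusTwoRepSpace := ⟨_, f_mem p.ok p.un⟩
def GG (p : KK) : {v : Fin 4 → ℂ // v ≠ 0} :=
  ⟨gg p.1.1 p.1.2.1 p.1.2.2.1, zz_ne p.ok.n1 p.ok.n2 _⟩

theorem FF_cont : Continuous FF := by
  apply Continuous.subtype_mk
  have a1 : Continuous (fun p : KK => p.1.1) := by fun_prop
  have a2 : Continuous (fun p : KK => p.1.2.1) := by fun_prop
  have a3 : Continuous (fun p : KK => p.1.2.2.1) := by fun_prop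
  have a4 : Continuous (fun p : KK => p.1.2.2.2) := by fun_prop
  have m1 := fun p : KK => p.ok.n1
  have m2 := fun p : KK => p.ok.n2
  have m3 := fun p : KK => p.ok.d0
  have m4 := fun p : KK => p.ok.d1
  have c := cont_star a4
  exact ((a4.mul (cont_hR a1 a3 m1 m3 m4)).mul c).prodMk
    (((a4.mul (cont_hS a1 a3 m1 m3 m4)).mul c).prodMk
    (((a4.mul (cont_hS a2 a3 m2 m3 m4)).mul c).prodMk
    ((a4.mul (cont_hR a2 a3 m2 m3 m4)).mul c)))

theorem GG_cont : Continuous GG := by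
  apply Continuous.subtype_mk
  exact cont_gg (by fun_prop) (by fun_prop) (by fun_prop)

theorem FF_surj : Function.Surjective FF := by
  rintro ⟨⟨R, S, R', S'⟩, h⟩
  have h' := h
  obtain ⟨n1, n2, n3, n4, e⟩ := h'
  simp only at n1 n2 n3 n4 e
  rw [nsq_iff] at n1 n2 n3 n4
  rw [inv_unit n1, inv_unit n2, inv_unit n3, inv_unit n4] at e
  have e' : R * S * star R * star S = S' * R' * star S' * star R' := by
    have n : Quaternion.normSq (R' * S' * star R' * star S') = 1 :=
      nsq_mul (nsq_mul (nsq_mul n3 n4) (nsq_star n3)) (nsq_star n4)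
    have s : S' * R' * star S' * star R' = star (R' * S' * star R' * star S') := by
      simp only [star_mul, star_star, mul_assoc]
    rw [s, ← mul_one (R * S * star R * star S), ← mul_star_unit n, ← mul_assoc, e, one_mul]
  obtain ⟨y1, y2, D, u, w, nu, f1, f2, f3, f4⟩ := F_surj n1 n2 n4 n3 e'
  refine ⟨⟨(y1, y2, D, u), (sph_iff _).2 w.n1, (sph_iff _).2 w.n2, ⟨w.d0, w.d1⟩, (sph_iff _).2 nu⟩, ?_⟩
  apply Subtype.ext
  simp only [FF]
  rw [← f1, ← f2, ← f3, ← f4]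

theorem GG_surj (z : CP3) : ∃ p, Quot.mk projRel (GG p) = z := by
  induction z using Quot.ind with
  | _ z =>
    obtain ⟨y1, y2, D, t, w, ht, e⟩ := gg_surj z.2
    exact ⟨⟨(y1, y2, D, 1), (sph_iff _).2 w.n1, (sph_iff _).2 w.n2, ⟨w.d0, w.d1⟩,
      (sph_iff _).2 (by simp)⟩, Quot.sound ⟨t, ht, e⟩⟩

theorem cx {a b v ha hb : HH} (na : Quaternion.normSq a = 1) (_nb : Quaternion.normSq b = 1)
    (nv : Quaternion.normSq v = 1) (h : b * hb * star b = v * (a * ha * star a) * star v) :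
    ha = star (star b * v * a) * hb * (star b * v * a) := by
  have e1 : star (star b * v * a) * hb * (star b * v * a) =
      star a * star v * (b * hb * star b) * v * a := by
    simp only [star_mul, star_star]; noncomm_ring
  have e2 : star a * star v * (v * (a * ha * star a) * star v) * v * a =
    star a * (star v * v) * a * ha * star a * (star v * v) * a := by noncomm_ring
  rw [e1, h, e2, star_mul_unit nv, mul_one, mul_one, star_mul_unit na, one_mul, mul_assoc,
    star_mul_unit na, mul_one]

theorem cx' {a b w ha hb : HH} (na : Quaternion.normSq a = 1) 
    (nw : Quaternion.normSq w = 1) (h : ha = star w * hb * w) :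
    b * hb * star b = (b * w * star a) * (a * ha * star a) * star (b * w * star a) := by
  have e1 : (b * w * star a) * (a * ha * star a) * star (b * w * star a) =
    b * w * (star a * a) * ha * (star a * a) * star w * star b := by
    simp only [star_mul, star_star]; noncomm_ring
  have e2 : b * w * (star w * hb * w) * star w * star b =
    b * (w * star w) * hb * (w * star w) * star b := by noncomm_ring
  rw [e1, star_mul_unit na, mul_one, mul_one, h, e2, mul_star_unit nw, mul_one, mul_one]

theorem conj_iff (p q : KK) : conjRel (FF p) (FF q) ↔
    ConjW p.1.1 p.1.2.1 p.1.2.2.1 q.1.1 q.1.2.1 q.1.2.2.1 := by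
  have np := p.un
  have nq := q.un
  constructor
  · rintro ⟨v, nv, e1, e2, e3, e4⟩
    rw [nsq_iff] at nv
    rw [inv_unit nv] at e1 e2 e3 e4
    exact ⟨star q.1.2.2.2 * v * p.1.2.2.2, nsq_mul (nsq_mul (nsq_star nq) nv) np, cx np nq nv e1,
      cx np nq nv e2, cx np nq nv e4, cx np nq nv e3⟩
  · rintro ⟨w, nw, e1, e2, e3, e4⟩
    have n : Quaternion.normSq (q.1.2.2.2 * w * star p.1.2.2.2) = 1 :=
      nsq_mul (nsq_mul nq nw) (nsq_star np)
    refine ⟨q.1.2.2.2 * w * star p.1.2.2.2, (nsq_iff _).2 n, ?_⟩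
    rw [inv_unit n]
    exact ⟨cx' np nw e1, cx' np nw e2, cx' np nw e4, cx' np nw e3⟩

theorem conj_equiv : Equivalence conjRel := by
  refine ⟨fun s => ⟨1, by simp⟩, ?_, ?_⟩
  · rintro s t ⟨u, nu, e1, e2, e3, e4⟩
    have u0 : u ≠ 0 := by intro h; rw [h] at nu; simp at nu
    have : ∀ x : HH, x = u⁻¹ * (u * x * u⁻¹) * u⁻¹⁻¹ := by
      intro x; rw [inv_inv]; simp only [mul_assoc]; rw [inv_mul_cancel₀ u0, mul_one, ← mul_assoc, inv_mul_cancel₀ u0, one_mul]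
    refine ⟨u⁻¹, by simp [nu], ?_⟩
    rw [e1, e2, e3, e4]
    exact ⟨this _, this _, this _, this _⟩
  · rintro s t r ⟨u, nu, e1, e2, e3, e4⟩ ⟨v, nv, f1, f2, f3, f4⟩
    refine ⟨v * u, by simp [nu, nv], ?_⟩
    rw [f1, f2, f3, f4, e1, e2, e3, e4, mul_inv_rev]
    simp only [mul_assoc, and_self]

theorem proj_equiv : Equivalence projRel := by
  refine ⟨fun s => ⟨1, one_ne_zero, by simp⟩, ?_, ?_⟩
  · rintro s t ⟨c, hc, e⟩
    exact ⟨c⁻¹, inv_ne_zero hc, by rw [e, smul_smul, inv_mul_cancel₀ hc, one_smul]⟩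
  · rintro s t r ⟨c, hc, e⟩ ⟨d, hd, f⟩
    exact ⟨d * c, mul_ne_zero hd hc, by rw [f, e, smul_smul]⟩

theorem fiber_iff (p q : KK) : Quot.mk conjRel (FF p) = Quot.mk conjRel (FF q) ↔
    Quot.mk projRel (GG p) = Quot.mk projRel (GG q) := by
  rw [conj_equiv.quot_mk_eq_iff, proj_equiv.quot_mk_eq_iff, conj_iff]
  constructor
  · intro h
    obtain ⟨κ, hκ, e⟩ := proj_of_conj p.ok q.ok h
    exact ⟨κ⁻¹, inv_ne_zero hκ, by
      change gg _ _ _ = κ⁻¹ • gg _ _ _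
      rw [e, smul_smul, inv_mul_cancel₀ hκ, one_smul]⟩
  · rintro ⟨κ, hκ, e⟩
    refine conj_of_proj p.ok q.ok (inv_ne_zero hκ) ?_
    change gg q.1.1 q.1.2.1 q.1.2.2.1 = κ • gg p.1.1 p.1.2.1 p.1.2.2.1 at e
    rw [e, smul_smul, inv_mul_cancel₀ hκ, one_smul]

def sepf (v : {v : Fin 4 → ℂ // v ≠ 0}) : Fin 4 → Fin 4 → ℂ :=
  fun i j => v.1 i * conj (v.1 j) / ((∑ k, ‖v.1 k‖ ^ 2 : ℝ) : ℂ)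

theorem sum_ne (v : {v : Fin 4 → ℂ // v ≠ 0}) : ((∑ k, ‖v.1 k‖ ^ 2 : ℝ) : ℂ) ≠ 0 := by
  intro h
  apply v.2
  have h' : (∑ k, ‖v.1 k‖ ^ 2 : ℝ) = 0 := by exact_mod_cast h
  rw [Finset.sum_eq_zero_iff_of_nonneg (fun i _ => by positivity)] at h'
  ext i
  simpa using h' i (Finset.mem_univ _)

theorem sepf_cont : Continuous sepf := by
  apply continuous_pi; intro i
  apply continuous_pi; intro j
  simp only [sepf]
  have h : ∀ i, Continuous (fun a : {v : Fin 4 → ℂ // v ≠ 0} => a.1 i) :=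
    fun i => (continuous_apply i).comp continuous_subtype_val
  apply Continuous.div
  · exact (h i).mul (Complex.continuous_conj.comp (h j))
  · exact Complex.continuous_ofReal.comp (continuous_finset_sum _ fun k _ => ((h k).norm.pow 2))
  · exact sum_ne

theorem sepf_rel (v w : {v : Fin 4 → ℂ // v ≠ 0}) (h : projRel v w) : sepf v = sepf w := by
  obtain ⟨c, hc, e⟩ := h
  funext i j
  have nv := sum_ne v
  have nw := sum_ne w
  simp only [sepf]
  have s : ((∑ k, ‖w.1 k‖ ^ 2 : ℝ) : ℂ) = c * conj c * ((∑ k, ‖v.1 k‖ ^ 2 : ℝ) : ℂ) := by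
    rw [Complex.mul_conj, Complex.normSq_eq_norm_sq, ← Complex.ofReal_mul, Finset.mul_sum, e]
    congr 1
    refine Finset.sum_congr rfl fun k _ => ?_
    rw [Pi.smul_apply, smul_eq_mul, norm_mul, mul_pow]
  rw [div_eq_div_iff nv nw, s, e]
  simp; ring

theorem sepf_inj (v w : {v : Fin 4 → ℂ // v ≠ 0}) (h : sepf v = sepf w) : projRel v w := by
  have nv := sum_ne v
  have nw := sum_ne w
  obtain ⟨j, hj⟩ : ∃ j, w.1 j ≠ 0 := by
    by_contra hc; push Not at hc; exact w.2 (funext hc)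
  have hj' : conj (w.1 j) ≠ 0 := by simpa using hj
  have E : ∀ i, v.1 i * conj (v.1 j) / ((∑ k, ‖v.1 k‖ ^ 2 : ℝ) : ℂ) =
      w.1 i * conj (w.1 j) / ((∑ k, ‖w.1 k‖ ^ 2 : ℝ) : ℂ) := fun i => congrFun (congrFun h i) j
  generalize ((∑ k, ‖v.1 k‖ ^ 2 : ℝ) : ℂ) = N at *
  generalize ((∑ k, ‖w.1 k‖ ^ 2 : ℝ) : ℂ) = M at *
  have hv : conj (v.1 j) ≠ 0 := by
    intro h0
    have := E j
    rw [h0, mul_zero, zero_div] at this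
    exact div_ne_zero (mul_ne_zero hj hj') nw this.symm
  refine ⟨conj (v.1 j) * M / (N * conj (w.1 j)), div_ne_zero (mul_ne_zero hv nw) (mul_ne_zero nv hj'), ?_⟩
  ext i
  have := E i
  rw [div_eq_div_iff nv nw] at this
  rw [Pi.smul_apply, smul_eq_mul]
  field_simp
  linear_combination -this

instance : T2Space CP3 := by
  refine T2Space.of_injective_continuous (f := Quot.lift sepf sepf_rel) ?_
    (continuous_quot_lift sepf_rel sepf_cont)
  intro a b h
  induction a using Quot.ind with
  | _ v =>
    induction b using Quot.ind with
    | _ w => exact Quot.sound (sepf_inj v w h)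

theorem quotF : Topology.IsQuotientMap (fun p : KK => (Quot.mk conjRel (FF p) : ChiF2)) := by
  have h1 : Topology.IsQuotientMap FF := FF_cont.isClosedMap.isQuotientMap FF_cont FF_surj
  exact isQuotientMap_quot_mk.comp h1

/-- The `SU(2)` character variety of the genus two surface is homeomorphic to `ℂP³`. -/
theorem chiF2_homeomorph_CP3 : Nonempty (ChiF2 ≃ₜ CP3) := by
  have hs := quotF.surjective
  have hc : CompactSpace ChiF2 := by
    rw [← isCompact_univ_iff, ← hs.range_eq]
    exact isCompact_range quotF.continuous
  choose σ hσ using hs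
  let φ : ChiF2 → CP3 := fun x => Quot.mk projRel (GG (σ x))
  have hφ : ∀ p, φ (Quot.mk conjRel (FF p)) = Quot.mk projRel (GG p) :=
    fun p => (fiber_iff _ _).1 (hσ _)
  have φc : Continuous φ := by
    rw [quotF.continuous_iff]
    have : φ ∘ (fun p : KK => (Quot.mk conjRel (FF p) : ChiF2)) = fun p => Quot.mk projRel (GG p) :=
      funext hφ
    rw [this]
    exact continuous_quot_mk.comp GG_cont
  have φb : Function.Bijective φ := by
    constructor
    · intro a b h
      have := (fiber_iff (σ a) (σ b)).2 h
      rw [← hσ a, ← hσ b]; exact this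
    · intro z
      obtain ⟨p, hp⟩ := GG_surj z
      exact ⟨_, (hφ p).trans hp⟩
  exact ⟨Continuous.homeoOfEquivCompactToT2 (f := Equiv.ofBijective φ φb) φc⟩
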